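/- arXiv:0712.1014 — 3 statements merged into one kernel-verified Lean document; each statement's English description precedes it below -/
import Mathlib

section
/- Let G be a finite simple graph without isolated vertices such that β(G)/α(G) = 5/4 (i.e., 4·β(G) = 5·α(G)). Then G has a spanning subgraph F every connected component of which is isomorphic to the spanner, and the number of connected components of F equals β(G) − α(G). -/
open SimpleGraph

/-- A matching of `G`, given as a finite set of edges of `G` that are pairwise non-adjacent. -/
def IsMatchingE {V : Type*} (G : SimpleGraph V) (M : Finset (Sym2 V)) : Prop :=
  ↑M ⊆ G.edgeSet ∧ ∀ e ∈ M, ∀ f ∈ M, e ≠ f → ∀ v : V, ¬(v ∈ e ∧ v ∈ f)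

/-- A vertex is covered by a set of edges if some edge of it is incident to the vertex. -/
def Covers {V : Type*} (M : Finset (Sym2 V)) (v : V) : Prop := ∃ e ∈ M, v ∈ e

/-- `β(G)`: the maximum size of a matching of `G`. -/
noncomputable def gBeta {V : Type*} (G : SimpleGraph V) : ℕ :=
  sSup {n | ∃ M : Finset (Sym2 V), IsMatchingE G M ∧ M.card = n}

/-- `λ(G)`: the maximum of `|H| + |H'|` over pairs `(H, H')` of disjoint matchings of `G`. -/
noncomputable def gLam {V : Type*} (G : SimpleGraph V) : ℕ :=
  sSup {n | ∃ H H' : Finset (Sym2 V), IsMatchingE G H ∧ IsMatchingE G H' ∧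
    Disjoint H H' ∧ H.card + H'.card = n}

/-- `α(G)`: the maximum of `|H|` over pairs `(H, H')` of disjoint matchings of `G`
with `|H| + |H'| = λ(G)`. -/
noncomputable def gAlpha {V : Type*} (G : SimpleGraph V) : ℕ :=
  sSup {n | ∃ H H' : Finset (Sym2 V), IsMatchingE G H ∧ IsMatchingE G H' ∧
    Disjoint H H' ∧ H.card + H'.card = gLam G ∧ H.card = n}

/-- `β₁(G)`: the maximum of `β(G \ F)` over maximum matchings `F` of `G`. -/
noncomputable def gBeta1 {V : Type*} (G : SimpleGraph V) : ℕ :=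
  sSup {n | ∃ F : Finset (Sym2 V), IsMatchingE G F ∧ F.card = gBeta G ∧
    gBeta (G.deleteEdges ↑F) = n}

/-- Membership in `M₂(G)`: `(H, H')` is a pair of disjoint matchings of `G` with
`|H| + |H'| = λ(G)` and `|H| = α(G)`. -/
def InM2 {V : Type*} (G : SimpleGraph V) (H H' : Finset (Sym2 V)) : Prop :=
  IsMatchingE G H ∧ IsMatchingE G H' ∧ Disjoint H H' ∧
  H.card + H'.card = gLam G ∧ H.card = gAlpha G

/-- Membership in `M₂(G, M)`: pairs from `M₂(G)` maximizing `|M ∩ (H ∪ H')|`. -/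
def InM2M {V : Type*} [DecidableEq V] (G : SimpleGraph V) (M H H' : Finset (Sym2 V)) : Prop :=
  InM2 G H H' ∧ ∀ K K' : Finset (Sym2 V), InM2 G K K' →
    (M ∩ (K ∪ K')).card ≤ (M ∩ (H ∪ H')).card

/-- The degree of a vertex `v` in the graph `F`. -/
noncomputable def fdeg {V : Type*} (F : SimpleGraph V) (v : V) : ℕ := (F.neighborSet v).ncard

/-- The spanner: two paths `a₁a₂a₃a₄a₅` and `b₁b₂b₃b₄b₅` joined by the edge `a₃b₃`.
Vertices `0..4` are `a₁..a₅` and `5..9` are `b₁..b₅`. -/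
def Spanner10 : SimpleGraph (Fin 10) :=
  SimpleGraph.fromEdgeSet
    {s(0, 1), s(1, 2), s(2, 3), s(3, 4), s(5, 6), s(6, 7), s(7, 8), s(8, 9), s(2, 7)}

/-- An S-forest: every connected component is isomorphic to the spanner. -/
def IsSForest {V : Type*} (F : SimpleGraph V) : Prop :=
  ∀ c : F.ConnectedComponent, Nonempty ((F.induce c.supp) ≃g Spanner10)

/-- `U(F)`: edges of `F` incident to a vertex of degree 1. -/
def USet {V : Type*} (F : SimpleGraph V) : Set (Sym2 V) :=
  {e | e ∈ F.edgeSet ∧ ∃ v ∈ e, fdeg F v = 1}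

/-- `L(F)`: edges of `F` not in `U(F)` incident to a vertex of degree 2. -/
def LSet {V : Type*} (F : SimpleGraph V) : Set (Sym2 V) :=
  {e | e ∈ F.edgeSet ∧ e ∉ USet F ∧ ∃ v ∈ e, fdeg F v = 2}

/-- `w` is the base of the 1-vertex `u` of `F`: a 3-vertex at `F`-distance 2 from `u`. -/
def IsBase {V : Type*} (F : SimpleGraph V) (u w : V) : Prop :=
  fdeg F w = 3 ∧ F.dist u w = 2

/-- `Δ(G, F)`: edges of `G` joining a 1-vertex of `F` to its base. -/
def DeltaSet {V : Type*} (G F : SimpleGraph V) : Set (Sym2 V) :=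
  {e | e ∈ G.edgeSet ∧ ∃ u w : V, e = s(u, w) ∧ fdeg F u = 1 ∧ IsBase F u w}

/-- `B(G, F) = E(G) \ (U(F) ∪ L(F) ∪ Δ(G, F))`. -/
def BSet {V : Type*} (G F : SimpleGraph V) : Set (Sym2 V) :=
  G.edgeSet \ (USet F ∪ LSet F ∪ DeltaSet G F)

/-- Condition (a): no 1-vertex of `F` is incident to an edge from `B(G, F)`. -/
def CondA {V : Type*} (G F : SimpleGraph V) : Prop :=
  ∀ v : V, fdeg F v = 1 → ∀ e ∈ BSet G F, v ∉ e

/-- Condition (b): if a 1-vertex `u` of `F` is incident to an edge from `Δ(G, F)`, then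
the 2-vertex of `F` adjacent to `u` in `F` is not incident to any edge from `B(G, F)`. -/
def CondB {V : Type*} (G F : SimpleGraph V) : Prop :=
  ∀ u v : V, fdeg F u = 1 → (∃ e ∈ DeltaSet G F, u ∈ e) →
    F.Adj u v → fdeg F v = 2 → ∀ e ∈ BSet G F, v ∉ e

/-- Condition (c): for every `L(F)`-`B(G, F)` alternating even closed trail of `G`
containing an edge joining two 2-vertices of `F`, the graph formed by its edges belonging
to `B(G, F)` is not bipartite (2-colorable). -/
def CondC {V : Type*} (G F : SimpleGraph V) : Prop :=
  ∀ (n : ℕ) (e : ℕ → Sym2 V),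
    1 ≤ n →
    (∀ i j, i < 2 * n → j < 2 * n → e i = e j → i = j) →
    (∀ i, i < 2 * n → e i ∈ G.edgeSet) →
    (∀ i, i + 1 < 2 * n → ∃ v : V, v ∈ e i ∧ v ∈ e (i + 1)) →
    (∃ v : V, v ∈ e (2 * n - 1) ∧ v ∈ e 0) →
    (∀ i, i < 2 * n → (i % 2 = 0 → e i ∈ LSet F) ∧ (i % 2 = 1 → e i ∈ BSet G F)) →
    (∃ i, i < 2 * n ∧ ∀ v ∈ e i, fdeg F v = 2) →
    ¬ (SimpleGraph.fromEdgeSet {f | ∃ i, i < 2 * n ∧ f = e i ∧ f ∈ BSet G F}).Colorable 2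


namespace SpannerProof

/-- A matching encoded as its partner involution (uncovered vertices are fixed). -/
def Inv {V : Type*} (G : SimpleGraph V) (m : V → V) : Prop :=
  (∀ v, m (m v) = v) ∧ ∀ v, m v ≠ v → G.Adj v (m v)

/-- The involution `m` encodes the edge set `M`. -/
def Rel {V : Type*} (M : Finset (Sym2 V)) (m : V → V) : Prop :=
  ∀ u v, u ≠ v → (m u = v ↔ s(u, v) ∈ M)

/-- Edge-disjointness of the encoded matchings. -/
def Dsj {V : Type*} (h k : V → V) : Prop := ∀ v, h v = k v → h v = v

/-- The covered vertices. -/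
def cov {V : Type*} [Fintype V] [DecidableEq V] (m : V → V) : Finset V :=
  Finset.univ.filter (fun v => m v ≠ v)

theorem mem_cov {V : Type*} [Fintype V] [DecidableEq V] {m : V → V} {v : V} :
    v ∈ cov m ↔ m v ≠ v := by simp [cov]

theorem toInv {V : Type*} {G : SimpleGraph V} {M : Finset (Sym2 V)} (hM : IsMatchingE G M) :
    ∃ m, Inv G m ∧ Rel M m := by
  classical
  have key : ∀ u v w, s(u, v) ∈ M → s(u, w) ∈ M → v = w := by
    intro u v w h1 h2
    by_contra hne
    refine hM.2 _ h1 _ h2 ?_ u ⟨by simp, by simp⟩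
    intro h
    simp at h
    grind
  have hadj : ∀ u v, s(u, v) ∈ M → G.Adj u v := fun u v h => hM.1 h
  let m : V → V := fun u => if h : ∃ v, s(u, v) ∈ M then h.choose else u
  have m1 : ∀ u v, s(u, v) ∈ M → m u = v := by
    intro u v h
    have hex : ∃ v, s(u, v) ∈ M := ⟨v, h⟩
    have : m u = hex.choose := by simp only [m]; rw [dif_pos hex]
    rw [this]
    exact key u _ _ hex.choose_spec h
  have m2 : ∀ u, m u ≠ u → s(u, m u) ∈ M := by
    intro u h
    by_cases hex : ∃ v, s(u, v) ∈ M
    · obtain ⟨v, hv⟩ := hex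
      rw [m1 u v hv]; exact hv
    · exfalso; apply h; simp only [m]; rw [dif_neg hex]
  refine ⟨m, ⟨?_, ?_⟩, ?_⟩
  · intro v
    by_cases h : m v = v
    · rw [h, h]
    · apply m1
      rw [Sym2.eq_swap]; exact m2 v h
  · intro v h
    exact hadj _ _ (m2 v h)
  · intro u v huv
    constructor
    · rintro rfl
      exact m2 u (Ne.symm huv)
    · exact m1 u v

theorem toFin {V : Type*} [Fintype V] [DecidableEq V] {G : SimpleGraph V} {m : V → V}
    (hm : Inv G m) : ∃ M, IsMatchingE G M ∧ Rel M m := by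
  have hmem : ∀ e, e ∈ (cov m).image (fun v => s(v, m v)) ↔ ∃ v, m v ≠ v ∧ s(v, m v) = e := by
    intro e; simp [mem_cov]
  refine ⟨(cov m).image (fun v => s(v, m v)), ⟨?_, ?_⟩, ?_⟩
  · intro e he
    obtain ⟨v, hv, rfl⟩ := (hmem e).1 he
    exact hm.2 v hv
  · intro e he f hf hne x hx
    obtain ⟨v, hv, rfl⟩ := (hmem e).1 he
    obtain ⟨w, hw, rfl⟩ := (hmem f).1 hf
    have := hm.1
    simp only [Sym2.mem_iff] at hx
    apply hne
    rw [Sym2.eq_iff]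
    grind
  · intro u v huv
    rw [hmem]
    have := hm.1
    constructor
    · rintro rfl
      exact ⟨u, huv.symm, rfl⟩
    · rintro ⟨w, hw, he⟩
      rw [Sym2.eq_iff] at he
      grind

theorem card_rel {V : Type*} [Fintype V] [DecidableEq V] {G : SimpleGraph V} {m : V → V}
    {M : Finset (Sym2 V)} (hM : IsMatchingE G M) (hr : Rel M m) :
    (cov m).card = 2 * M.card := by
  have h1 : cov m = M.biUnion (fun e => e.toFinset) := by
    ext v
    simp only [mem_cov, Finset.mem_biUnion, Sym2.mem_toFinset]
    constructor
    · intro h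
      exact ⟨s(v, m v), (hr v (m v) (Ne.symm h)).1 rfl, by simp⟩
    · rintro ⟨e, he, hv⟩
      obtain ⟨w, rfl⟩ := hv
      have hne : v ≠ w := G.ne_of_adj (hM.1 he)
      rw [(hr v w hne).2 he]
      exact hne.symm
  rw [h1, Finset.card_biUnion]
  · rw [Finset.sum_const_nat (m := 2), mul_comm]
    intro e he
    exact Sym2.card_toFinset_of_not_isDiag _ (G.not_isDiag_of_mem_edgeSet (hM.1 he))
  · intro e he f hf hne
    show Disjoint e.toFinset f.toFinset
    rw [Finset.disjoint_left]
    intro v hv hv'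
    exact hM.2 e he f hf hne v ⟨Sym2.mem_toFinset.1 hv, Sym2.mem_toFinset.1 hv'⟩

theorem dsj_iff {V : Type*} {G : SimpleGraph V} {h k : V → V} {H K : Finset (Sym2 V)}
    (hH : IsMatchingE G H) (h1 : Rel H h) (h2 : Rel K k) : Disjoint H K ↔ Dsj h k := by
  rw [Finset.disjoint_left]
  constructor
  · intro hd v hv
    by_contra hne
    exact hd ((h1 v (h v) (Ne.symm hne)).1 rfl) ((h2 v (h v) (Ne.symm hne)).1 hv.symm)
  · intro hd e he he'
    induction e with
    | _ u v =>
      have hne : u ≠ v := G.ne_of_adj (hH.1 he)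
      have e1 := (h1 u v hne).2 he
      have e2 := (h2 u v hne).2 he'
      exact hne (by rw [← e1]; exact (hd u (by rw [e1, e2])).symm)

/-- `(h, h')` is an optimal pair (total size first, then the size of `h`). -/
def Opt {V : Type*} [Fintype V] [DecidableEq V] (G : SimpleGraph V) (h h' : V → V) : Prop :=
  Inv G h ∧ Inv G h' ∧ Dsj h h' ∧ ∀ k k', Inv G k → Inv G k' → Dsj k k' →
    (cov k).card + (cov k').card ≤ (cov h).card + (cov h').card ∧
    ((cov k).card + (cov k').card = (cov h).card + (cov h').card →
      (cov k).card ≤ (cov h).card)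

theorem exists_beta {V : Type*} [Fintype V] [DecidableEq V] (G : SimpleGraph V) :
    ∃ m, Inv G m ∧ (cov m).card = 2 * gBeta G := by
  have hne : {n | ∃ M : Finset (Sym2 V), IsMatchingE G M ∧ M.card = n}.Nonempty :=
    ⟨0, ∅, ⟨by simp, by simp⟩, rfl⟩
  have hb : BddAbove {n | ∃ M : Finset (Sym2 V), IsMatchingE G M ∧ M.card = n} := by
    refine ⟨Fintype.card (Sym2 V), ?_⟩
    rintro n ⟨M, -, rfl⟩
    exact Finset.card_le_univ M
  obtain ⟨M, hM, hc⟩ := Nat.sSup_mem hne hb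
  obtain ⟨m, hm, hr⟩ := toInv hM
  refine ⟨m, hm, ?_⟩
  rw [card_rel hM hr, hc]; rfl

theorem exists_alpha {V : Type*} [Fintype V] [DecidableEq V] (G : SimpleGraph V) :
    ∃ h h', Opt G h h' ∧ (cov h).card = 2 * gAlpha G := by
  have hne : {n | ∃ H H' : Finset (Sym2 V), IsMatchingE G H ∧ IsMatchingE G H' ∧
    Disjoint H H' ∧ H.card + H'.card = n}.Nonempty :=
    ⟨0, ∅, ∅, ⟨by simp, by simp⟩, ⟨by simp, by simp⟩, by simp, rfl⟩
  have hb : BddAbove {n | ∃ H H' : Finset (Sym2 V), IsMatchingE G H ∧ IsMatchingE G H' ∧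
    Disjoint H H' ∧ H.card + H'.card = n} := by
    refine ⟨Fintype.card (Sym2 V) + Fintype.card (Sym2 V), ?_⟩
    rintro n ⟨M, M', -, -, -, rfl⟩
    exact Nat.add_le_add (Finset.card_le_univ M) (Finset.card_le_univ M')
  have hne2 : {n | ∃ H H' : Finset (Sym2 V), IsMatchingE G H ∧ IsMatchingE G H' ∧
    Disjoint H H' ∧ H.card + H'.card = gLam G ∧ H.card = n}.Nonempty := by
    obtain ⟨H, H', a, b, c, d⟩ := Nat.sSup_mem hne hb
    exact ⟨_, H, H', a, b, c, d, rfl⟩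
  have hb2 : BddAbove {n | ∃ H H' : Finset (Sym2 V), IsMatchingE G H ∧ IsMatchingE G H' ∧
    Disjoint H H' ∧ H.card + H'.card = gLam G ∧ H.card = n} := by
    refine ⟨Fintype.card (Sym2 V), ?_⟩
    rintro n ⟨M, M', -, -, -, -, rfl⟩
    exact Finset.card_le_univ M
  obtain ⟨H, H', a, b, c, d, e⟩ := Nat.sSup_mem hne2 hb2
  replace e : H.card = gAlpha G := e
  obtain ⟨h, hh, hr⟩ := toInv a
  obtain ⟨h', hh', hr'⟩ := toInv b
  refine ⟨h, h', ⟨hh, hh', (dsj_iff a hr hr').1 c, ?_⟩, by rw [card_rel a hr, e]⟩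
  intro k k' hk hk' hd
  obtain ⟨K, hK, hKr⟩ := toFin hk
  obtain ⟨K', hK', hKr'⟩ := toFin hk'
  have hdd := (dsj_iff hK hKr hKr').2 hd
  rw [card_rel a hr, card_rel b hr', card_rel hK hKr, card_rel hK' hKr']
  have h1 : K.card + K'.card ≤ gLam G := le_csSup hb ⟨K, K', hK, hK', hdd, rfl⟩
  refine ⟨by omega, fun heq => ?_⟩
  have h2 : K.card ≤ gAlpha G := le_csSup hb2 ⟨K, K', hK, hK', hdd, by omega, rfl⟩
  omega

/-- Delete the edge at `u`. -/
def del {V : Type*} [DecidableEq V] (h : V → V) (u : V) : V → V :=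
  fun x => if x = u ∨ x = h u then x else h x

/-- Add the edge `uv`. -/
def add {V : Type*} [DecidableEq V] (h : V → V) (u v : V) : V → V :=
  fun x => if x = u then v else if x = v then u else h x

set_option linter.unusedSectionVars false

section ops
variable {V : Type*} [Fintype V] [DecidableEq V] {G : SimpleGraph V} {h h' : V → V}

theorem inv_del (hh : Inv G h) (u : V) : Inv G (del h u) := by
  obtain ⟨h1, h2⟩ := hh
  constructor
  · intro v
    simp only [del]
    grind
  · intro v
    simp only [del]
    grind

theorem inv_add (hh : Inv G h) {u v : V} (hu : h u = u) (hv : h v = v) (ha : G.Adj u v) :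
    Inv G (add h u v) := by
  obtain ⟨h1, h2⟩ := hh
  have hne := G.ne_of_adj ha
  have ha' := ha.symm
  constructor
  · intro v
    simp only [add]
    grind
  · intro v
    simp only [add]
    grind

theorem card_del (hh : Inv G h) {u : V} (hu : h u ≠ u) :
    (cov (del h u)).card + 2 = (cov h).card := by
  obtain ⟨h1, h2⟩ := hh
  have e : cov (del h u) = ((cov h).erase u).erase (h u) := by
    ext x
    simp only [mem_cov, Finset.mem_erase, del]
    grind
  rw [e]
  have m1 : u ∈ cov h := mem_cov.2 hu
  have m2 : h u ∈ (cov h).erase u := by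
    rw [Finset.mem_erase, mem_cov]
    grind
  have := Finset.card_erase_add_one m1
  have := Finset.card_erase_add_one m2
  omega

theorem card_add {u v : V} (hu : h u = u) (hv : h v = v) (hne : u ≠ v) :
    (cov (add h u v)).card = (cov h).card + 2 := by
  have e : cov (add h u v) = insert u (insert v (cov h)) := by
    ext x
    simp only [mem_cov, Finset.mem_insert, add]
    grind
  rw [e, Finset.card_insert_of_notMem, Finset.card_insert_of_notMem]
  · simp [mem_cov, hv]
  · simp [mem_cov, hu, hne]

theorem Dsj.symm (hd : Dsj h h') : Dsj h' h := fun v e => by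
  have := hd v e.symm
  rw [e, this]

theorem Opt.of_card (ho : Opt G h h') {k k' : V → V} (hk : Inv G k) (hk' : Inv G k')
    (hd : Dsj k k') (e : (cov k).card = (cov h).card) (e' : (cov k').card = (cov h').card) :
    Opt G k k' := by
  refine ⟨hk, hk', hd, ?_⟩
  rw [e, e']
  exact ho.2.2.2

theorem Opt.le (ho : Opt G h h') : (cov h').card ≤ (cov h).card :=
  (ho.2.2.2 h' h ho.2.1 ho.1 ho.2.2.1.symm).2 (by omega)

/-- Swapping the two matchings along a closed vertex set. -/
theorem Opt.swap (ho : Opt G h h') (S : Finset V) (hS : ∀ x ∈ S, h x ∈ S)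
    (hS' : ∀ x ∈ S, h' x ∈ S) (hc : ∀ x ∈ S, h' x ≠ x) : ∀ x ∈ S, h x ≠ x := by
  intro y hy hyy
  obtain ⟨⟨a1, a2⟩, ⟨b1, b2⟩, hd, hopt⟩ := ho
  have hT : ∀ x, x ∉ S → h x ∉ S := fun x hx hx' => hx (by have := hS _ hx'; rwa [a1] at this)
  have hT' : ∀ x, x ∉ S → h' x ∉ S := fun x hx hx' => hx (by have := hS' _ hx'; rwa [b1] at this)
  let k : V → V := fun x => if x ∈ S then h' x else h x
  let k' : V → V := fun x => if x ∈ S then h x else h' x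
  have i1 : Inv G k := by
    constructor
    · intro v; simp only [k]; grind
    · intro v; simp only [k]; grind
  have i2 : Inv G k' := by
    constructor
    · intro v; simp only [k']; grind
    · intro v; simp only [k']; grind
  have i3 : Dsj k k' := by
    intro v
    have := hd v
    simp only [k, k']
    grind
  have c1 : (cov k).card + (cov k').card = (cov h).card + (cov h').card := by
    simp only [cov, Finset.card_filter]
    rw [← Finset.sum_add_distrib, ← Finset.sum_add_distrib]
    apply Finset.sum_congr rfl
    intro x _
    simp only [k, k']
    by_cases hx : x ∈ S
    · simp only [hx, if_true]; rw [add_comm]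
    · simp only [hx, if_false]
  have c2 : (cov h).card < (cov k).card := by
    apply Finset.card_lt_card
    rw [Finset.ssubset_iff_of_subset]
    · refine ⟨y, ?_, ?_⟩
      · rw [mem_cov]; simp only [k, hy, if_true]; exact hc y hy
      · rw [mem_cov]; simpa using hyy
    · intro x
      rw [mem_cov, mem_cov]
      simp only [k]
      grind
  have := (hopt k k' i1 i2 i3).2 c1
  omega

/-- Vertices whose `m`-edge is used by `h` or `h'`. -/
def agr (m h h' : V → V) : Finset V :=
  Finset.univ.filter (fun v => m v ≠ v ∧ (m v = h v ∨ m v = h' v))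

/-- Optimal pair with maximal agreement with `m`. -/
def OptM (G : SimpleGraph V) (m h h' : V → V) : Prop :=
  Opt G h h' ∧ ∀ k k', Opt G k k' → (agr m k k').card ≤ (agr m h h').card

theorem exists_optM (m : V → V) (ho : Opt G h h') :
    ∃ k k', OptM G m k k' ∧ (cov k).card = (cov h).card := by
  classical
  obtain ⟨p, hp, hmax⟩ := Finset.exists_max_image
    (Finset.univ.filter (fun p : (V → V) × (V → V) => Opt G p.1 p.2))
    (fun p => (agr m p.1 p.2).card) ⟨(h, h'), by simpa using ho⟩
  have hp' : Opt G p.1 p.2 := by simpa using hp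
  refine ⟨p.1, p.2, ⟨hp', fun k k' hk => hmax (k, k') (by simpa using hk)⟩, ?_⟩
  have h1 := ho.2.2.2 _ _ hp'.1 hp'.2.1 hp'.2.2.1
  have h2 := hp'.2.2.2 _ _ ho.1 ho.2.1 ho.2.2.1
  have e := le_antisymm h1.1 h2.1
  exact le_antisymm (h1.2 e) (h2.2 e.symm)

theorem lem1 {m : V → V} (hm : Inv G m) (ho : OptM G m h h') {u : V} (hu : h u = u)
    (hmu : m u ≠ u) : m u = h' u := by
  by_contra hne
  obtain ⟨ho, hmax⟩ := ho
  have ho' := ho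
  obtain ⟨ih, ih', hd, hopt⟩ := ho'
  have ha := hm.2 u hmu
  obtain ⟨a1, a2⟩ := id ih
  obtain ⟨b1, b2⟩ := id ih'
  obtain ⟨m1, m2⟩ := id hm
  by_cases hv : h (m u) = m u
  · have hx := (hopt (add h u (m u)) h' (inv_add ih hu hv ha) ih' (by
      intro x
      have := hd x
      simp only [add]
      grind)).1
    rw [card_add hu hv (Ne.symm hmu)] at hx
    omega
  · have id' := inv_del ih (m u)
    have e1 : del h (m u) u = u := by simp only [del]; grind
    have e2 : del h (m u) (m u) = m u := by simp [del]
    have o := ho.of_card (inv_add id' e1 e2 ha) ih' (by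
      intro x
      have := hd x
      simp only [add, del]
      grind) (by
      rw [card_add e1 e2 (Ne.symm hmu), card_del ih hv]) rfl
    have hle := hmax _ _ o
    have hlt : (agr m h h').card < (agr m (add (del h (m u)) u (m u)) h').card := by
      apply Finset.card_lt_card
      rw [Finset.ssubset_iff_of_subset]
      · refine ⟨u, ?_, ?_⟩
        · simp only [agr, Finset.mem_filter, Finset.mem_univ, true_and, add]
          grind
        · simp [agr, hne, hu, hmu]
      · intro x
        simp only [agr, Finset.mem_filter, Finset.mem_univ, true_and, add, del]
        grind
    omega

theorem lem1' {m : V → V} (hm : Inv G m) (ho : OptM G m h h') {u : V} (hu : h' u = u)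
    (hmu : m u ≠ u) : m u = h u := by
  by_contra hne
  obtain ⟨ho, hmax⟩ := ho
  have ho' := ho
  obtain ⟨ih, ih', hd, hopt⟩ := ho'
  have ha := hm.2 u hmu
  obtain ⟨a1, a2⟩ := id ih
  obtain ⟨b1, b2⟩ := id ih'
  obtain ⟨m1, m2⟩ := id hm
  by_cases hv : h' (m u) = m u
  · have hx := (hopt h (add h' u (m u)) ih (inv_add ih' hu hv ha) (by
      intro x
      have := hd x
      simp only [add]
      grind)).1
    rw [card_add hu hv (Ne.symm hmu)] at hx
    omega
  · have id' := inv_del ih' (m u)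
    have e1 : del h' (m u) u = u := by simp only [del]; grind
    have e2 : del h' (m u) (m u) = m u := by simp [del]
    have o := ho.of_card ih (inv_add id' e1 e2 ha) (by
      intro x
      have := hd x
      simp only [add, del]
      grind) rfl (by
      rw [card_add e1 e2 (Ne.symm hmu), card_del ih' hv])
    have hle := hmax _ _ o
    have hlt : (agr m h h').card < (agr m h (add (del h' (m u)) u (m u))).card := by
      apply Finset.card_lt_card
      rw [Finset.ssubset_iff_of_subset]
      · refine ⟨u, ?_, ?_⟩
        · simp only [agr, Finset.mem_filter, Finset.mem_univ, true_and, add]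
          grind
        · simp [agr, hne, hu, hmu]
      · intro x
        simp only [agr, Finset.mem_filter, Finset.mem_univ, true_and, add, del]
        grind
    omega

end ops

section main
variable {V : Type*} [Fintype V] [DecidableEq V] {G : SimpleGraph V} {m h h' : V → V}

/-- The first five vertices of the alternating path starting at `v`. -/
def q (h h' : V → V) (v : V) : Fin 5 → V :=
  ![v, h' v, h (h' v), h' (h (h' v)), h (h' (h (h' v)))]

/-- Start vertices of long alternating paths. -/
def Lset (m h h' : V → V) : Finset V :=
  Finset.univ.filter (fun v => m v ≠ v ∧ h v = v ∧ h' (h (h' v)) ≠ h (h' v))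

theorem A_facts (hm : Inv G m) (ho : OptM G m h h') {v : V} (h1 : m v ≠ v) (h2 : h v = v) :
    m v = h' v ∧ h' v ≠ v ∧ h (h' v) ≠ h' v := by
  have e := lem1 hm ho h2 h1
  have e2 : h' v ≠ v := by rwa [← e]
  refine ⟨e, e2, ?_⟩
  intro hc
  have b1 := ho.1.2.1.1
  refine ho.1.swap {v, h' v} ?_ ?_ ?_ v (by simp) h2
  all_goals
    intro x hx
    simp only [Finset.mem_insert, Finset.mem_singleton] at hx ⊢
    grind

theorem L_facts (hm : Inv G m) (ho : OptM G m h h') {v : V} (hv : v ∈ Lset m h h') :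
    m v = h' v ∧ h' v ≠ v ∧ h (h' v) ≠ h' v ∧ h v = v ∧ h' (h (h' v)) ≠ h (h' v) ∧
      h (h' (h (h' v))) ≠ h' (h (h' v)) := by
  simp only [Lset, Finset.mem_filter, Finset.mem_univ, true_and] at hv
  obtain ⟨h1, h2, h3⟩ := hv
  obtain ⟨e1, e2, e3⟩ := A_facts hm ho h1 h2
  refine ⟨e1, e2, e3, h2, h3, ?_⟩
  intro hc
  have a1 := ho.1.1.1
  have b1 := ho.1.2.1.1
  refine ho.1.swap {v, h' v, h (h' v), h' (h (h' v))} ?_ ?_ ?_ v (by simp) h2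
  all_goals
    intro x hx
    simp only [Finset.mem_insert, Finset.mem_singleton] at hx ⊢
    grind

theorem ne14 (hm : Inv G m) (ho : OptM G m h h') {v w : V} (hv : v ∈ Lset m h h')
    (hw : w ∈ Lset m h h') : h' v ≠ h (h' (h (h' w))) := by
  intro hc
  have a1 := ho.1.1.1
  have b1 := ho.1.2.1.1
  obtain ⟨-, v1, v2, v3, v4, v5⟩ := L_facts hm ho hv
  obtain ⟨-, w1, w2, w3, w4, w5⟩ := L_facts hm ho hw
  refine ho.1.swap {w, h' w, h (h' w), h' (h (h' w)), h' v, v} ?_ ?_ ?_ v (by simp) v3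
  all_goals
    intro x hx
    simp only [Finset.mem_insert, Finset.mem_singleton] at hx ⊢
    grind

theorem ne34 (hm : Inv G m) (ho : OptM G m h h') {v w : V} (hv : v ∈ Lset m h h')
    (hw : w ∈ Lset m h h') : h' (h (h' v)) ≠ h (h' (h (h' w))) := by
  intro hc
  have a1 := ho.1.1.1
  have b1 := ho.1.2.1.1
  obtain ⟨-, v1, v2, v3, v4, v5⟩ := L_facts hm ho hv
  obtain ⟨-, w1, w2, w3, w4, w5⟩ := L_facts hm ho hw
  refine ho.1.swap {w, h' w, h (h' w), h' (h (h' w)), h' (h (h' v)), h (h' v), h' v, v}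
    ?_ ?_ ?_ v (by simp) v3
  all_goals
    intro x hx
    simp only [Finset.mem_insert, Finset.mem_singleton] at hx ⊢
    grind

theorem q_lt (hm : Inv G m) (ho : OptM G m h h') {v w : V} (hv : v ∈ Lset m h h')
    (hw : w ∈ Lset m h h') {i j : Fin 5} (hij : i < j) : q h h' v i ≠ q h h' w j := by
  have a1 := ho.1.1.1
  have b1 := ho.1.2.1.1
  have n1 := ne14 hm ho hv hw
  have n2 := ne34 hm ho hv hw
  obtain ⟨-, v1, v2, v3, v4, v5⟩ := L_facts hm ho hv
  obtain ⟨-, w1, w2, w3, w4, w5⟩ := L_facts hm ho hw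
  fin_cases i <;> fin_cases j <;> first
    | (exfalso; revert hij; decide)
    | (simp [q]; grind)

theorem q_inj (hm : Inv G m) (ho : OptM G m h h') {v w : V} (hv : v ∈ Lset m h h')
    (hw : w ∈ Lset m h h') {i j : Fin 5} (e : q h h' v i = q h h' w j) : v = w ∧ i = j := by
  rcases lt_trichotomy i j with hij | hij | hij
  · exact absurd e (q_lt hm ho hv hw hij)
  · subst hij
    have a1 := ho.1.1.1
    have b1 := ho.1.2.1.1
    refine ⟨?_, rfl⟩
    fin_cases i <;> simp [q] at e <;> grind
  · exact absurd e.symm (q_lt hm ho hw hv hij)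

theorem card_L (hm : Inv G m) (ho : OptM G m h h') :
    (cov m).card ≤ (Lset m h h').card + (cov h).card ∧
    ((Lset m h h').card + (cov h).card = (cov m).card →
      (∀ v, m v ≠ v → h v = v → v ∈ Lset m h h') → ∀ v, h v ≠ v → m v ≠ v) := by
  have a1 := ho.1.1.1
  have b1 := ho.1.2.1.1
  have m1 := hm.1
  have e1 := Finset.card_sdiff_add_card (cov m) (cov h)
  have e2 := Finset.card_sdiff_add_card (cov h) (cov m)
  rw [Finset.union_comm] at e2
  have e3 : (cov m \ cov h) \ Lset m h h' ⊆ cov m \ cov h := Finset.sdiff_subset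
  have hsub : Lset m h h' ⊆ cov m \ cov h := by
    intro v hv
    simp only [Lset, Finset.mem_filter, Finset.mem_univ, true_and] at hv
    simp only [Finset.mem_sdiff, mem_cov]
    grind
  have e4 := Finset.card_sdiff_add_card_eq_card hsub
  have e5 : ((cov m \ cov h) \ Lset m h h').card ≤ (cov h \ cov m).card := by
    apply Finset.card_le_card_of_injOn (fun v => h (h' v))
    · intro v hv
      have hv : v ∈ (cov m \ cov h) \ Lset m h h' := hv
      show h (h' v) ∈ cov h \ cov m
      simp only [Lset, Finset.mem_sdiff, Finset.mem_filter, Finset.mem_univ, true_and,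
        mem_cov] at hv ⊢
      obtain ⟨f1, f2, f3⟩ := A_facts hm ho hv.1.1 (by grind)
      refine ⟨by grind, ?_⟩
      intro hc
      have := lem1' hm ho (u := h (h' v)) (by grind) hc
      grind
    · intro v _ w _ e
      simp only at e
      grind
  refine ⟨by omega, ?_⟩
  intro heq hall v hv hmv
  have : (cov m \ cov h) \ Lset m h h' = ∅ := by
    ext x
    simp only [Finset.mem_sdiff, mem_cov, Finset.notMem_empty, iff_false]
    intro hx
    exact hx.2 (hall x hx.1.1 (by grind))
  rw [this] at e4
  simp only [Finset.card_empty] at e4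
  have h0 : (cov h \ cov m).card = 0 := by omega
  rw [Finset.card_eq_zero] at h0
  have : v ∈ cov h \ cov m := by
    simp only [Finset.mem_sdiff, mem_cov]
    grind
  rw [h0] at this
  simp at this

theorem q_ne_h (hm : Inv G m) (ho : OptM G m h h') {v : V} (hv : v ∈ Lset m h h')
    {i : Fin 5} (hi : i ≠ 0) : h (q h h' v i) ≠ q h h' v i := by
  have a1 := ho.1.1.1
  have b1 := ho.1.2.1.1
  obtain ⟨-, v1, v2, v3, v4, v5⟩ := L_facts hm ho hv
  fin_cases i <;> simp [q] <;> grind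

theorem q_ne_h' (hm : Inv G m) (ho : OptM G m h h') {v : V} (hv : v ∈ Lset m h h')
    {i : Fin 5} (hi : i ≠ 4) : h' (q h h' v i) ≠ q h h' v i := by
  have a1 := ho.1.1.1
  have b1 := ho.1.2.1.1
  obtain ⟨-, v1, v2, v3, v4, v5⟩ := L_facts hm ho hv
  fin_cases i <;> simp [q] <;> grind

theorem im_card (hm : Inv G m) (ho : OptM G m h h') (I : Finset (Fin 5)) :
    ((Lset m h h' ×ˢ I).image (fun p => q h h' p.1 p.2)).card = (Lset m h h').card * I.card := by
  rw [Finset.card_image_of_injOn, Finset.card_product]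
  rintro ⟨v, i⟩ hv ⟨w, j⟩ hw e
  have hv : (v, i) ∈ Lset m h h' ×ˢ I := hv
  have hw : (w, j) ∈ Lset m h h' ×ˢ I := hw
  rw [Finset.mem_product] at hv hw
  obtain ⟨e1, e2⟩ := q_inj hm ho hv.1 hw.1 e
  simp only at e1 e2
  rw [e1, e2]

/-- The full structure in the equality case. -/
theorem structure_eq (hm : Inv G m) (ho : OptM G m h h') {p : ℕ}
    (hcm : (cov m).card = 10 * p) (hch : (cov h).card = 8 * p) :
    (Lset m h h').card = 2 * p ∧ (cov h').card = (cov h).card ∧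
    (∀ x, h x ≠ x → ∃ v ∈ Lset m h h', ∃ i, i ≠ 0 ∧ x = q h h' v i) ∧
    (∀ x, h' x ≠ x → ∃ v ∈ Lset m h h', ∃ i, i ≠ 4 ∧ x = q h h' v i) ∧
    (∀ v ∈ Lset m h h', h' (q h h' v 4) = q h h' v 4) ∧
    (∀ v ∈ Lset m h h', ∃ w ∈ Lset m h h', m (q h h' v 2) = q h h' w 2 ∧
      m (q h h' v 2) ≠ q h h' v 2) := by
  have a1 := ho.1.1.1
  have b1 := ho.1.2.1.1
  have m1 := hm.1
  have s1 : (Lset m h h' ×ˢ (Finset.univ.erase 0)).image (fun p => q h h' p.1 p.2) ⊆ cov h := by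
    intro x hx
    simp only [Finset.mem_image, Finset.mem_product, Prod.exists, Finset.mem_erase] at hx
    obtain ⟨v, i, ⟨hv, hi, -⟩, rfl⟩ := hx
    exact mem_cov.2 (q_ne_h hm ho hv hi)
  have s2 : (Lset m h h' ×ˢ (Finset.univ.erase 4)).image (fun p => q h h' p.1 p.2) ⊆ cov h' := by
    intro x hx
    simp only [Finset.mem_image, Finset.mem_product, Prod.exists, Finset.mem_erase] at hx
    obtain ⟨v, i, ⟨hv, hi, -⟩, rfl⟩ := hx
    exact mem_cov.2 (q_ne_h' hm ho hv hi)
  have k1 := Finset.card_le_card s1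
  have k2 := Finset.card_le_card s2
  rw [im_card hm ho] at k1 k2
  have c4 : (Finset.univ.erase (0 : Fin 5)).card = 4 := by decide
  have c4' : (Finset.univ.erase (4 : Fin 5)).card = 4 := by decide
  rw [c4] at k1
  rw [c4'] at k2
  have k3 := ho.1.le
  obtain ⟨k4, k5⟩ := card_L hm ho
  have hL : (Lset m h h').card = 2 * p := by omega
  have r1 := Finset.eq_of_subset_of_card_le s1 (by rw [im_card hm ho, c4]; omega)
  have r2 := Finset.eq_of_subset_of_card_le s2 (by rw [im_card hm ho, c4']; omega)
  have t1 : ∀ x, h x ≠ x → ∃ v ∈ Lset m h h', ∃ i, i ≠ 0 ∧ x = q h h' v i := by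
    intro x hx
    have hx := mem_cov.2 hx
    rw [← r1] at hx
    simp only [Finset.mem_image, Finset.mem_product, Prod.exists, Finset.mem_erase] at hx
    obtain ⟨v, i, ⟨hv, hi, -⟩, rfl⟩ := hx
    exact ⟨v, hv, i, hi, rfl⟩
  have t2 : ∀ x, h' x ≠ x → ∃ v ∈ Lset m h h', ∃ i, i ≠ 4 ∧ x = q h h' v i := by
    intro x hx
    have hx := mem_cov.2 hx
    rw [← r2] at hx
    simp only [Finset.mem_image, Finset.mem_product, Prod.exists, Finset.mem_erase] at hx
    obtain ⟨v, i, ⟨hv, hi, -⟩, rfl⟩ := hx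
    exact ⟨v, hv, i, hi, rfl⟩
  have t3 : ∀ v ∈ Lset m h h', h' (q h h' v 4) = q h h' v 4 := by
    intro v hv
    by_contra hne
    obtain ⟨w, hw, i, hi, e⟩ := t2 _ hne
    exact hi (q_inj hm ho hv hw e).2.symm
  -- every start vertex is long
  have t4 : ∀ v, m v ≠ v → h v = v → v ∈ Lset m h h' := by
    intro v h1 h2
    obtain ⟨f1, f2, f3⟩ := A_facts hm ho h1 h2
    obtain ⟨w, hw, i, hi, e⟩ := t2 v f2
    by_cases hi0 : i = 0
    · subst hi0
      have : v = w := by simpa [q] using e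
      rw [this]; exact hw
    · exact absurd h2 (by rw [e]; exact q_ne_h hm ho hw hi0)
  have t5 := k5 (by omega) t4
  have t6 : ∀ v ∈ Lset m h h', m (q h h' v 4) = q h h' v 3 := by
    intro v hv
    have := lem1' hm ho (t3 v hv) (t5 _ (q_ne_h hm ho hv (by decide)))
    rw [this]
    simp [q, a1]
  have t7 : ∀ v ∈ Lset m h h', m (q h h' v 0) = q h h' v 1 := by
    intro v hv
    obtain ⟨w0, -⟩ := L_facts hm ho hv
    simpa [q] using w0
  refine ⟨hL, by omega, t1, t2, t3, ?_⟩
  intro v hv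
  have n2 : m (q h h' v 2) ≠ q h h' v 2 := t5 _ (q_ne_h hm ho hv (by decide))
  have x1 : h (m (q h h' v 2)) ≠ m (q h h' v 2) := by
    intro hc
    have hl := lem1 hm ho hc (by rw [m1]; exact Ne.symm n2)
    rw [m1] at hl
    have e3 : m (q h h' v 2) = q h h' v 3 := by
      have : m (q h h' v 2) = h' (q h h' v 2) := by rw [hl, b1]; exact congrArg m hl.symm
      rw [this]; simp [q]
    rw [e3] at hc
    exact q_ne_h hm ho hv (by decide) hc
  obtain ⟨w, hw, i, hi, e⟩ := t1 _ x1
  have e' : m (q h h' w i) = q h h' v 2 := by rw [← e, m1]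
  have u1 : i ≠ 1 := by
    rintro rfl
    rw [← t7 w hw, m1] at e'
    exact absurd (q_inj hm ho hw hv e').2 (by decide)
  have u3 : i ≠ 3 := by
    rintro rfl
    rw [← t6 w hw, m1] at e'
    exact absurd (q_inj hm ho hw hv e').2 (by decide)
  have u4 : i ≠ 4 := by
    rintro rfl
    rw [t6 w hw] at e'
    exact absurd (q_inj hm ho hw hv e').2 (by decide)
  have dec : ∀ i : Fin 5, i ≠ 0 → i ≠ 1 → i ≠ 3 → i ≠ 4 → i = 2 := by decide
  have : i = 2 := dec i hi u1 u3 u4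
  subst this
  exact ⟨w, hw, e, n2⟩

end main

section surgery
variable {V : Type*} [Fintype V] [DecidableEq V] {G : SimpleGraph V} {m h h' : V → V}

theorem surg1 (ho : Opt G h h') {z a1 a2 b0 b1 b2 : V} (hz : h z = z) (hz' : h' z = z)
    (hb0 : h b0 = b0) (ha : h a1 = a2) (hb : h b1 = b2) (hb' : h' b0 = b1)
    (hab : h' a2 ≠ b2) (hn : [z, a1, a2, b0, b1, b2].Nodup)
    (hza : G.Adj z a1) (h22 : G.Adj a2 b2) : False := by
  obtain ⟨ih, ih', hd, hopt⟩ := ho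
  obtain ⟨i1, i2⟩ := id ih
  obtain ⟨j1, j2⟩ := id ih'
  simp only [List.nodup_cons, List.mem_cons, List.not_mem_nil, not_or, or_false,
    List.nodup_nil, and_true, not_false_eq_true] at hn
  have had : G.Adj b0 b1 := by have := j2 b0 (by grind); rwa [hb'] at this
  have e1 := card_del ih (u := a1) (by grind)
  have v1 := inv_del ih a1
  have e2 := card_del v1 (u := b1) (by simp only [del]; grind)
  have v2 := inv_del v1 b1
  have x3 : del (del h a1) b1 z = z := by simp only [del]; grind
  have y3 : del (del h a1) b1 a1 = a1 := by simp only [del]; grind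
  have e3 := card_add x3 y3 hza.ne
  have v3 := inv_add v2 x3 y3 hza
  have x4 : add (del (del h a1) b1) z a1 a2 = a2 := by simp only [del, add]; grind
  have y4 : add (del (del h a1) b1) z a1 b2 = b2 := by simp only [del, add]; grind
  have e4 := card_add x4 y4 h22.ne
  have v4 := inv_add v3 x4 y4 h22
  have x5 : add (add (del (del h a1) b1) z a1) a2 b2 b0 = b0 := by simp only [del, add]; grind
  have y5 : add (add (del (del h a1) b1) z a1) a2 b2 b1 = b1 := by simp only [del, add]; grind
  have e5 := card_add x5 y5 had.ne
  have v5 := inv_add v4 x5 y5 had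
  have e6 := card_del ih' (u := b0) (by grind)
  have v6 := inv_del ih' b0
  have := (hopt _ _ v5 v6 (by
    intro x
    have := hd x
    simp only [del, add]
    grind)).2 (by omega)
  omega

theorem surg2 (ho : Opt G h h') {z a0 a1 a2 : V} (hz : h z = z) (hz' : h' z = z)
    (ha0 : h a0 = a0) (ha : h a1 = a2) (ha' : h' a0 = a1)
    (hn : [z, a0, a1, a2].Nodup) (hza : G.Adj z a2) : False := by
  obtain ⟨ih, ih', hd, hopt⟩ := ho
  obtain ⟨i1, i2⟩ := id ih
  obtain ⟨j1, j2⟩ := id ih'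
  simp only [List.nodup_cons, List.mem_cons, List.not_mem_nil, not_or, or_false,
    List.nodup_nil, and_true, not_false_eq_true] at hn
  have had : G.Adj a0 a1 := by have := j2 a0 (by grind); rwa [ha'] at this
  have e1 := card_del ih (u := a1) (by grind)
  have v1 := inv_del ih a1
  have x3 : del h a1 z = z := by simp only [del]; grind
  have y3 : del h a1 a2 = a2 := by simp only [del]; grind
  have e3 := card_add x3 y3 hza.ne
  have v3 := inv_add v1 x3 y3 hza
  have x4 : add (del h a1) z a2 a0 = a0 := by simp only [del, add]; grind
  have y4 : add (del h a1) z a2 a1 = a1 := by simp only [del, add]; grind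
  have e4 := card_add x4 y4 had.ne
  have v4 := inv_add v3 x4 y4 had
  have e6 := card_del ih' (u := a0) (by grind)
  have v6 := inv_del ih' a0
  have := (hopt _ _ v4 v6 (by
    intro x
    have := hd x
    simp only [del, add]
    grind)).2 (by omega)
  omega

theorem surg0 (ho : Opt G h h') {z y : V} (hz : h z = z) (hz' : h' z = z)
    (hy : h y = y) (hza : G.Adj z y) : False := by
  obtain ⟨ih, ih', hd, hopt⟩ := ho
  have e3 := card_add hz hy hza.ne
  have v3 := inv_add ih hz hy hza
  have j1 := ih'.1
  have := (hopt _ _ v3 ih' (by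
    intro x
    have := hd x
    have := hza.ne
    simp only [add]
    grind)).1
  omega

theorem Opt.flip (ho : Opt G h h') (e : (cov h').card = (cov h).card) : Opt G h' h := by
  refine ⟨ho.2.1, ho.1, ho.2.2.1.symm, ?_⟩
  intro k k' a b c
  have := ho.2.2.2 k k' a b c
  rw [e] at this ⊢
  exact this

/-- No vertex is missed. -/
theorem all_covered (hiso : ∀ v : V, ∃ u : V, G.Adj v u)
    (hm : Inv G m) (ho : OptM G m h h') {p : ℕ}
    (hcm : (cov m).card = 10 * p) (hch : (cov h).card = 8 * p) (z : V) :
    ∃ v ∈ Lset m h h', ∃ i, z = q h h' v i := by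
  obtain ⟨-, hcc, t1, t2, t3, t4⟩ := structure_eq hm ho hcm hch
  by_cases hz : h z = z
  swap
  · obtain ⟨v, hv, i, -, e⟩ := t1 z hz
    exact ⟨v, hv, i, e⟩
  by_cases hz' : h' z = z
  swap
  · obtain ⟨v, hv, i, -, e⟩ := t2 z hz'
    exact ⟨v, hv, i, e⟩
  exfalso
  have hof := ho.1.flip hcc
  have a1 := ho.1.1.1
  have b1 := ho.1.2.1.1
  obtain ⟨y, hy⟩ := hiso z
  by_cases hhy : h y = y
  · exact surg0 ho.1 hz hz' hhy hy
  by_cases hhy' : h' y = y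
  · exact surg0 hof hz' hz hhy' hy
  have zne : ∀ v ∈ Lset m h h', ∀ i, z ≠ q h h' v i := by
    intro v hv i e
    by_cases hi : i = 0
    · subst hi
      exact q_ne_h' hm ho hv (by decide) (e ▸ hz')
    · exact q_ne_h hm ho hv hi (e ▸ hz)
  obtain ⟨v, hv, i, hi, rfl⟩ := t1 y hhy
  obtain ⟨w, hw, e, hne⟩ := t4 v hv
  have hadj := hm.2 _ hne
  rw [e] at hadj
  have hvw : v ≠ w := by
    rintro rfl
    exact hadj.ne rfl
  have qne : ∀ i j, q h h' v i ≠ q h h' w j := fun i j e => hvw (q_inj hm ho hv hw e).1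
  have qv : ∀ i j, q h h' v i = q h h' v j → i = j := fun i j e => (q_inj hm ho hv hv e).2
  have qw : ∀ i j, q h h' w i = q h h' w j → i = j := fun i j e => (q_inj hm ho hw hw e).2
  have zv := zne v hv
  have zw := zne w hw
  have v01 : h' (q h h' v 0) = q h h' v 1 := by simp [q]
  have v12 : h (q h h' v 1) = q h h' v 2 := by simp [q]
  have v23 : h' (q h h' v 2) = q h h' v 3 := by simp [q]
  have v34 : h (q h h' v 3) = q h h' v 4 := by simp [q]
  have v21 : h (q h h' v 2) = q h h' v 1 := by simp [q, a1]
  have v32 : h' (q h h' v 3) = q h h' v 2 := by simp [q, b1]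
  have w01 : h' (q h h' w 0) = q h h' w 1 := by simp [q]
  have w12 : h (q h h' w 1) = q h h' w 2 := by simp [q]
  have w32 : h' (q h h' w 3) = q h h' w 2 := by simp [q, b1]
  have w43 : h (q h h' w 4) = q h h' w 3 := by simp [q, a1]
  have v0 : h (q h h' v 0) = q h h' v 0 := (L_facts hm ho hv).2.2.2.1
  have w0 : h (q h h' w 0) = q h h' w 0 := (L_facts hm ho hw).2.2.2.1
  have w4 := t3 w hw
  have nd : ∀ i j k i' j' k' : Fin 5, [i, j, k].Nodup → [i', j', k'].Nodup →
      [z, q h h' v i, q h h' v j, q h h' w i', q h h' w j', q h h' w k'].Nodup := by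
    intro i j k i' j' k' hA hB
    simp only [List.nodup_cons, List.mem_cons, List.not_mem_nil, not_or, or_false,
      List.nodup_nil, and_true, not_false_eq_true] at hA hB ⊢
    grind
  have dec : ∀ i : Fin 5, i ≠ 0 → i = 1 ∨ i = 2 ∨ i = 3 ∨ i = 4 := by decide
  rcases dec i hi with rfl | rfl | rfl | rfl
  · exact surg1 ho.1 hz hz' w0 v12 w12 w01 (by rw [v23]; exact qne _ _)
      (nd 1 2 3 0 1 2 (by decide) (by decide)) hy hadj
  · refine surg2 ho.1 hz hz' v0 v12 v01 ?_ hy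
    simp only [List.nodup_cons, List.mem_cons, List.not_mem_nil, not_or, or_false,
      List.nodup_nil, and_true, not_false_eq_true]
    have q1 := qv 0 1
    have q2 := qv 0 2
    have q3 := qv 1 2
    refine ⟨⟨zv _, zv _, zv _⟩, ⟨fun e => by simpa using q1 e, fun e => by simpa using q2 e⟩,
      fun e => by simpa using q3 e⟩
  · exact surg1 hof hz' hz w4 v32 w32 w43 (by rw [v21]; exact qne _ _)
      (nd 3 2 1 4 3 2 (by decide) (by decide)) hy hadj
  · exact hhy' (t3 v hv)

end surgery

section build

instance decSp : DecidableRel Spanner10.Adj := fun i j =>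
  decidable_of_iff ((s(i, j) = s(0, 1) ∨ s(i, j) = s(1, 2) ∨ s(i, j) = s(2, 3) ∨
    s(i, j) = s(3, 4) ∨ s(i, j) = s(5, 6) ∨ s(i, j) = s(6, 7) ∨ s(i, j) = s(7, 8) ∨
    s(i, j) = s(8, 9) ∨ s(i, j) = s(2, 7)) ∧ i ≠ j) (by
      unfold Spanner10
      rw [SimpleGraph.fromEdgeSet_adj]
      simp only [Set.mem_insert_iff, Set.mem_singleton_iff])

theorem sp_shift : ∀ i j : Fin 10, Spanner10.Adj i j → Spanner10.Adj (i + 5) (j + 5) := by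
  decide

theorem sp_cases : ∀ i j : Fin 10, Spanner10.Adj i j → i < j →
    (i = 0 ∧ j = 1) ∨ (i = 1 ∧ j = 2) ∨ (i = 2 ∧ j = 3) ∨ (i = 3 ∧ j = 4) ∨ (i = 5 ∧ j = 6) ∨
    (i = 6 ∧ j = 7) ∨ (i = 7 ∧ j = 8) ∨ (i = 8 ∧ j = 9) ∨ (i = 2 ∧ j = 7) := by
  decide

theorem sp_conn (i : Fin 10) : Spanner10.Reachable 2 i := by
  have a (i j : Fin 10) (h : Spanner10.Adj i j) : Spanner10.Reachable i j := h.reachable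
  have r1 := a 2 1 (by decide)
  have r0 := r1.trans (a 1 0 (by decide))
  have r3 := a 2 3 (by decide)
  have r4 := r3.trans (a 3 4 (by decide))
  have r7 := a 2 7 (by decide)
  have r6 := r7.trans (a 7 6 (by decide))
  have r5 := r6.trans (a 6 5 (by decide))
  have r8 := r7.trans (a 7 8 (by decide))
  have r9 := r8.trans (a 8 9 (by decide))
  have r2 := SimpleGraph.Reachable.refl (G := Spanner10) 2
  fin_cases i <;> assumption

theorem build {V A : Type*} [Fintype V] (G : SimpleGraph V)
    (Q : A → Fin 5 → V) (hinj : ∀ v w i j, Q v i = Q w j → v = w ∧ i = j)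
    (hsurj : ∀ x, ∃ v i, x = Q v i) (σ : A → A) (hσ : ∀ v, σ (σ v) = v) (hσ' : ∀ v, σ v ≠ v)
    (g01 : ∀ v, G.Adj (Q v 0) (Q v 1)) (g12 : ∀ v, G.Adj (Q v 1) (Q v 2))
    (g23 : ∀ v, G.Adj (Q v 2) (Q v 3)) (g34 : ∀ v, G.Adj (Q v 3) (Q v 4))
    (g22 : ∀ v, G.Adj (Q v 2) (Q (σ v) 2)) :
    ∃ F : SimpleGraph V, F ≤ G ∧ IsSForest F ∧
      10 * Nat.card F.ConnectedComponent = Fintype.card V := by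
  classical
  let r : Fin 10 → Fin 5 := fun i => ⟨i.val % 5, Nat.mod_lt _ (by norm_num)⟩
  let φ : A → Fin 10 → V := fun v i => Q (if i.val < 5 then v else σ v) (r i)
  have d1 : ∀ i j : Fin 10, i.val < 5 → j.val < 5 → r i = r j → i = j := by decide
  have d2 : ∀ i j : Fin 10, ¬ i.val < 5 → ¬ j.val < 5 → r i = r j → i = j := by decide
  have d3 : ∀ i j : Fin 10, i.val < 5 → ¬ j.val < 5 → r i = r j → j = i + 5 := by decide
  have d4 : ∀ i j : Fin 10, ¬ i.val < 5 → j.val < 5 → r i = r j → j = i + 5 := by decide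
  have d5 : ∀ i : Fin 10, ((i + 5).val < 5 ↔ ¬ i.val < 5) := by decide
  have d6 : ∀ i : Fin 10, r (i + 5) = r i := by decide
  have d7 : ∀ i : Fin 10, i + 5 + 5 = i := by decide
  have φeq : ∀ v w i j, φ v i = φ w j → (w = v ∧ j = i) ∨ (w = σ v ∧ j = i + 5) := by
    intro v w i j e
    obtain ⟨e1, e2⟩ := hinj _ _ _ _ e
    by_cases hi : i.val < 5 <;> by_cases hj : j.val < 5 <;> simp only [hi, hj, if_true, if_false] at e1
    · exact Or.inl ⟨e1.symm, (d1 i j hi hj e2).symm⟩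
    · exact Or.inr ⟨by rw [e1, hσ], d3 i j hi hj e2⟩
    · exact Or.inr ⟨e1.symm, d4 i j hi hj e2⟩
    · exact Or.inl ⟨by rw [← hσ w, ← e1, hσ], (d2 i j hi hj e2).symm⟩
  have φinj : ∀ v, Function.Injective (φ v) := by
    intro v i j e
    rcases φeq v v i j e with h | h
    · exact h.2.symm
    · exact absurd h.1.symm (hσ' v)
  have φs : ∀ v i, φ (σ v) (i + 5) = φ v i := by
    intro v i
    simp only [φ, d5, d6, hσ]
    by_cases hi : i.val < 5 <;> simp [hi]
  have φs' : ∀ v i, φ (σ v) i = φ v (i + 5) := by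
    intro v i
    rw [← φs v (i + 5), d7]
  let F : SimpleGraph V :=
    { Adj := fun x y => ∃ v i j, φ v i = x ∧ φ v j = y ∧ Spanner10.Adj i j
      symm := ⟨by
        rintro x y ⟨v, i, j, h1, h2, h3⟩
        exact ⟨v, j, i, h2, h1, h3.symm⟩⟩
      loopless := ⟨by
        rintro x ⟨v, i, j, h1, h2, h3⟩
        have := φinj v (h1.trans h2.symm)
        exact h3.ne this⟩ }
  have Fadj : ∀ v i y, F.Adj (φ v i) y → ∃ j, y = φ v j ∧ Spanner10.Adj i j := by
    rintro v i y ⟨w, a, b, h1, h2, h3⟩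
    rcases φeq v w i a h1.symm with ⟨e1, e2⟩ | ⟨e1, e2⟩
    · subst e1 e2
      exact ⟨b, h2.symm, h3⟩
    · subst e1 e2
      refine ⟨b + 5, ?_, ?_⟩
      · rw [← h2, φs']
      · have := sp_shift _ _ h3
        rwa [d7] at this
  have Fsp : ∀ v i j, F.Adj (φ v i) (φ v j) ↔ Spanner10.Adj i j := by
    intro v i j
    constructor
    · intro h
      obtain ⟨k, e, h⟩ := Fadj v i _ h
      rwa [φinj v e]
    · intro h
      exact ⟨v, i, j, rfl, rfl, h⟩
  have Freach : ∀ v i, F.Reachable (φ v 2) (φ v i) := by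
    intro v i
    let f : Spanner10 →g F := ⟨φ v, fun {a b} h => (Fsp v a b).2 h⟩
    exact (sp_conn i).map f
  have hsupp : ∀ v, (F.connectedComponentMk (φ v 2)).supp = Set.range (φ v) := by
    intro v
    ext x
    rw [SimpleGraph.ConnectedComponent.mem_supp_iff, SimpleGraph.ConnectedComponent.eq]
    constructor
    · intro h
      obtain ⟨p⟩ := h.symm
      have : ∀ a b (p : F.Walk a b), a ∈ Set.range (φ v) → b ∈ Set.range (φ v) := by
        intro a b p
        induction p with
        | nil => exact id
        | cons h p ih =>
          rintro ⟨i, rfl⟩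
          obtain ⟨j, rfl, -⟩ := Fadj v i _ h
          exact ih ⟨j, rfl⟩
      exact this _ _ p ⟨2, rfl⟩
    · rintro ⟨i, rfl⟩
      exact (Freach v i).symm
  have hcomp : ∀ c : F.ConnectedComponent, ∃ v, c.supp = Set.range (φ v) := by
    intro c
    induction c using SimpleGraph.ConnectedComponent.ind with
    | _ x =>
      obtain ⟨v, i, rfl⟩ := hsurj x
      refine ⟨v, ?_⟩
      rw [← hsupp v]
      congr 1
      rw [SimpleGraph.ConnectedComponent.eq]
      have : Q v i = φ v ⟨i.val, by omega⟩ := by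
        simp only [φ, r]
        rw [if_pos i.isLt]
        congr 1
        ext
        exact (Nat.mod_eq_of_lt i.isLt).symm
      rw [this]
      exact (Freach v _).symm
  refine ⟨F, ?_, ?_, ?_⟩
  · have key : ∀ v i j, i < j → Spanner10.Adj i j → G.Adj (φ v i) (φ v j) := by
      intro v i j hlt h
      rcases sp_cases i j h hlt with ⟨rfl, rfl⟩ | ⟨rfl, rfl⟩ | ⟨rfl, rfl⟩ | ⟨rfl, rfl⟩ |
        ⟨rfl, rfl⟩ | ⟨rfl, rfl⟩ | ⟨rfl, rfl⟩ | ⟨rfl, rfl⟩ | ⟨rfl, rfl⟩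
      exacts [g01 v, g12 v, g23 v, g34 v, g01 (σ v), g12 (σ v), g23 (σ v), g34 (σ v), g22 v]
    rintro x y ⟨v, i, j, rfl, rfl, h⟩
    rcases lt_trichotomy i j with hlt | rfl | hlt
    · exact key v i j hlt h
    · exact absurd rfl h.ne
    · exact (key v j i hlt h.symm).symm
  · intro c
    obtain ⟨v, hv⟩ := hcomp c
    rw [hv]
    refine ⟨SimpleGraph.Iso.symm ⟨Equiv.ofInjective (φ v) (φinj v), ?_⟩⟩
    intro a b
    exact Fsp v a b
  · have hcard : ∀ c : F.ConnectedComponent, Fintype.card c.supp = 10 := by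
      intro c
      obtain ⟨v, hv⟩ := hcomp c
      rw [← Nat.card_eq_fintype_card, hv, Nat.card_range_of_injective (φinj v)]
      simp
    have e : V ≃ Σ c : F.ConnectedComponent, c.supp :=
      (Equiv.sigmaFiberEquiv F.connectedComponentMk).symm
    rw [Fintype.card_congr e, Fintype.card_sigma]
    simp only [hcard]
    rw [Finset.sum_const, Finset.card_univ, Nat.card_eq_fintype_card, smul_eq_mul, mul_comm]

end build

end SpannerProof

open SpannerProof

/-- if `β(G)/α(G) = 5/4` for a graph `G` without isolated vertices, then
`G` has a spanning S-forest with exactly `β(G) − α(G)` connected components. -/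
theorem stmt15 {V : Type*} [Fintype V] [DecidableEq V] (G : SimpleGraph V)
    (hiso : ∀ v : V, ∃ u : V, G.Adj v u)
    (heq : 4 * gBeta G = 5 * gAlpha G) :
    ∃ F : SimpleGraph V, F ≤ G ∧ IsSForest F ∧
      Nat.card F.ConnectedComponent = gBeta G - gAlpha G := by
  obtain ⟨m, hm, hcm⟩ := exists_beta G
  obtain ⟨k, k', ho0, hck⟩ := exists_alpha G
  obtain ⟨h, h', ho, hch⟩ := exists_optM m ho0
  obtain ⟨p, hp⟩ : ∃ p, gAlpha G = 4 * p := ⟨gAlpha G / 4, by omega⟩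
  have hcm' : (cov m).card = 10 * p := by omega
  have hch' : (cov h).card = 8 * p := by omega
  obtain ⟨hL, -, -, -, -, t4⟩ := structure_eq hm ho hcm' hch'
  have hall := all_covered hiso hm ho hcm' hch'
  have ha := ho.1.1
  have hb := ho.1.2.1
  choose s hs hs1 hs2 using t4
  obtain ⟨F, hF, hS, hc⟩ := build G (A := {v // v ∈ Lset m h h'}) (fun v => q h h' v.1)
    (by
      intro v w i j e
      obtain ⟨e1, e2⟩ := q_inj hm ho v.2 w.2 e
      exact ⟨Subtype.ext e1, e2⟩)
    (by
      intro x
      obtain ⟨v, hv, i, e⟩ := hall x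
      exact ⟨⟨v, hv⟩, i, e⟩)
    (fun v => ⟨s v.1 v.2, hs v.1 v.2⟩)
    (by
      rintro ⟨v, hv⟩
      apply Subtype.ext
      have e1 := hs1 v hv
      have e2 := hs1 _ (hs v hv)
      rw [← e1, hm.1] at e2
      exact (q_inj hm ho hv (hs _ (hs v hv)) e2).1.symm)
    (by
      rintro ⟨v, hv⟩ e
      have e0 : s v hv = v := congrArg Subtype.val e
      apply hs2 v hv
      rw [hs1 v hv, e0])
    (by
      rintro ⟨v, hv⟩
      obtain ⟨-, v1, v2, v3, v4, v5⟩ := L_facts hm ho hv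
      exact hb.2 _ v1)
    (by
      rintro ⟨v, hv⟩
      obtain ⟨-, v1, v2, v3, v4, v5⟩ := L_facts hm ho hv
      exact ha.2 _ v2)
    (by
      rintro ⟨v, hv⟩
      obtain ⟨-, v1, v2, v3, v4, v5⟩ := L_facts hm ho hv
      exact hb.2 _ v4)
    (by
      rintro ⟨v, hv⟩
      obtain ⟨-, v1, v2, v3, v4, v5⟩ := L_facts hm ho hv
      exact ha.2 _ v5)
    (by
      rintro ⟨v, hv⟩
      have := hm.2 _ (hs2 v hv)
      rw [hs1 v hv] at this
      exact this)
  refine ⟨F, hF, hS, ?_⟩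
  have hV : Fintype.card V = 5 * (2 * p) := by
    have e1 := im_card hm ho Finset.univ
    have e2 : (Lset m h h' ×ˢ (Finset.univ : Finset (Fin 5))).image
        (fun p => q h h' p.1 p.2) = Finset.univ := by
      ext x
      obtain ⟨v, hv, i, e⟩ := hall x
      simp only [Finset.mem_image, Finset.mem_product, Finset.mem_univ, and_true, iff_true]
      exact ⟨(v, i), hv, e.symm⟩
    rw [e2, Finset.card_univ, Finset.card_univ, Fintype.card_fin, hL] at e1
    omega
  omega
end

section
/- Let G be a finite simple graph without isolated vertices with β(G)/α(G) = 5/4 (i.e., 4·β(G) = 5·α(G)), and let F be any spanning S-forest of G. If (u, v) is an edge of G not belonging to F and u has degree 1 in F, then v is the base of u, i.e., v has degree 3 in F and the distance between u and v in F equals 2. -/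
open SimpleGraph

/-- Edges of the spanner as a finset. -/
def SpE : Finset (Sym2 (Fin 10)) :=
  {s(0, 1), s(1, 2), s(2, 3), s(3, 4), s(5, 6), s(6, 7), s(7, 8), s(8, 9), s(2, 7)}

theorem sp_adj (i j : Fin 10) : Spanner10.Adj i j ↔ s(i, j) ∈ SpE := by
  have hd : ∀ e ∈ SpE, ¬ e.IsDiag := by decide
  have h1 : Spanner10.Adj i j ↔ s(i, j) ∈ SpE ∧ i ≠ j := by
    simp only [Spanner10, SpE, SimpleGraph.fromEdgeSet_adj, Set.mem_insert_iff,
      Set.mem_singleton_iff, Finset.mem_insert, Finset.mem_singleton]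
  rw [h1]
  refine ⟨fun h => h.1, fun h => ⟨h, fun hij => hd _ h ?_⟩⟩
  simpa using hij

/-- A parametrisation of the components of an S-forest by the spanner. -/
structure IsPar {V C : Type*} (F : SimpleGraph V) (g : C → Fin 10 → V) : Prop where
  inj : ∀ c d i j, g c i = g d j → c = d ∧ i = j
  surj : ∀ v, ∃ c i, g c i = v
  adj : ∀ c i w, F.Adj (g c i) w ↔ ∃ j, w = g c j ∧ s(i, j) ∈ SpE

theorem exists_par {V : Type*} (F : SimpleGraph V) (hF : IsSForest F) :
    ∃ g : F.ConnectedComponent → Fin 10 → V, IsPar F g := by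
  have φ := fun c => (hF c).some
  have hm : ∀ c i, F.connectedComponentMk ((φ c).symm i).1 = c := fun c i => ((φ c).symm i).2
  refine ⟨fun c i => ((φ c).symm i).1, ?_, ?_, ?_⟩
  · intro c d i j h
    have hcd : c = d := by
      rw [← hm c i, ← hm d j]
      exact congrArg _ h
    subst hcd
    exact ⟨rfl, (φ c).symm.injective (Subtype.ext h)⟩
  · intro v
    refine ⟨F.connectedComponentMk v, φ _ ⟨v, rfl⟩, ?_⟩
    simp
  · intro c i w
    constructor
    · intro h
      have hw : F.connectedComponentMk w = c := by
        rw [← hm c i]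
        exact (SimpleGraph.ConnectedComponent.eq.2 h.reachable).symm
      refine ⟨φ c ⟨w, hw⟩, by simp, ?_⟩
      rw [← sp_adj, ← (φ c).symm.map_adj_iff]
      simpa using h
    · rintro ⟨j, rfl, hj⟩
      rw [← sp_adj, ← (φ c).symm.map_adj_iff] at hj
      simpa using hj

theorem IsPar.twist {V C : Type*} {F : SimpleGraph V} {g : C → Fin 10 → V} (hg : IsPar F g)
    (c : C) (σ : Equiv.Perm (Fin 10)) (hσ : ∀ i j, s(σ i, σ j) ∈ SpE ↔ s(i, j) ∈ SpE) :
    ∃ g' : C → Fin 10 → V, IsPar F g' ∧ (∀ i, g' c i = g c (σ i)) ∧ ∀ d, d ≠ c → g' d = g d := by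
  classical
  obtain ⟨τ, h1, h2⟩ : ∃ τ : C → Equiv.Perm (Fin 10), τ c = σ ∧ ∀ d, d ≠ c → τ d = 1 :=
    ⟨fun d => if d = c then σ else 1, by simp, fun d hd => by simp [hd]⟩
  have hτ : ∀ d i j, s(τ d i, τ d j) ∈ SpE ↔ s(i, j) ∈ SpE := by
    intro d i j
    by_cases hd : d = c
    · subst hd; rw [h1]; exact hσ i j
    · rw [h2 d hd]; rfl
  refine ⟨fun d i => g d (τ d i), ⟨?_, ?_, ?_⟩, fun i => by simp only [h1], fun d hd => by
    funext i; simp [h2 d hd]⟩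
  · intro a b i j h
    obtain ⟨rfl, h⟩ := hg.inj _ _ _ _ h
    exact ⟨rfl, (τ a).injective h⟩
  · intro v
    obtain ⟨a, i, rfl⟩ := hg.surj v
    exact ⟨a, (τ a).symm i, by simp⟩
  · intro a i w
    rw [hg.adj]
    constructor
    · rintro ⟨j, rfl, hj⟩
      refine ⟨(τ a).symm j, by simp, ?_⟩
      rw [← hτ a]; simpa using hj
    · rintro ⟨j, rfl, hj⟩
      exact ⟨τ a j, rfl, (hτ a _ _).2 hj⟩

theorem IsPar.fdeg_eq {V C : Type*} {F : SimpleGraph V} {g : C → Fin 10 → V} (hg : IsPar F g)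
    (c : C) (i : Fin 10) :
    fdeg F (g c i) = (Finset.univ.filter (fun j => s(i, j) ∈ SpE)).card := by
  have : F.neighborSet (g c i) =
      (g c) '' (↑(Finset.univ.filter (fun j => s(i, j) ∈ SpE)) : Set (Fin 10)) := by
    ext w
    rw [SimpleGraph.mem_neighborSet, hg.adj]
    simp only [Set.mem_image, Finset.coe_filter, Finset.mem_univ, true_and, Set.mem_ofPred_eq]
    constructor
    · rintro ⟨j, rfl, h⟩; exact ⟨j, h, rfl⟩
    · rintro ⟨j, h, rfl⟩; exact ⟨j, rfl, h⟩
  rw [fdeg, this, Set.ncard_image_of_injective, Set.ncard_coe_finset]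
  intro i j h
  exact (hg.inj _ _ _ _ h).2

theorem IsPar.edge {V C : Type*} {F : SimpleGraph V} {g : C → Fin 10 → V} (hg : IsPar F g)
    (c : C) (e : Sym2 (Fin 10)) (he : e ∈ SpE) : Sym2.map (g c) e ∈ F.edgeSet := by
  induction e using Sym2.ind with
  | _ i j =>
    rw [Sym2.map_mk, SimpleGraph.mem_edgeSet, hg.adj]
    exact ⟨j, rfl, he⟩

/-- A pair of disjoint matchings supported on the components in `S`. -/
def HasPair {V C : Type*} (G : SimpleGraph V) (g : C → Fin 10 → V) (S : Finset C)
    (a b : ℕ) : Prop :=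
  ∃ H H' : Finset (Sym2 V), IsMatchingE G H ∧ IsMatchingE G H' ∧ Disjoint H H' ∧
    (∀ e ∈ H, ∀ v ∈ e, ∃ c ∈ S, ∃ i, g c i = v) ∧
    (∀ e ∈ H', ∀ v ∈ e, ∃ c ∈ S, ∃ i, g c i = v) ∧ H.card = a ∧ H'.card = b

theorem HasPair.union {V C : Type*} [DecidableEq V] [DecidableEq C] {G F : SimpleGraph V}
    {g : C → Fin 10 → V} (hg : IsPar F g)
    {S T : Finset C} {a b a' b' : ℕ} (h1 : HasPair G g S a b) (h2 : HasPair G g T a' b')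
    (hST : Disjoint S T) : HasPair G g (S ∪ T) (a + a') (b + b') := by
  obtain ⟨H, H', m, m', d, s, s', ca, cb⟩ := h1
  obtain ⟨K, K', n, n', d', t, t', ca', cb'⟩ := h2
  have sep : ∀ A B : Finset (Sym2 V), (∀ e ∈ A, ∀ v ∈ e, ∃ c ∈ S, ∃ i, g c i = v) →
      (∀ e ∈ B, ∀ v ∈ e, ∃ c ∈ T, ∃ i, g c i = v) →
      ∀ e ∈ A, ∀ f ∈ B, ∀ v, ¬ (v ∈ e ∧ v ∈ f) := by
    rintro A B hA hB e he f hf v ⟨h1, h2⟩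
    obtain ⟨c, hc, i, rfl⟩ := hA e he v h1
    obtain ⟨c', hc', i', h⟩ := hB f hf _ h2
    obtain ⟨rfl, -⟩ := hg.inj _ _ _ _ h
    exact Finset.disjoint_left.1 hST hc hc'
  have disj : ∀ A B : Finset (Sym2 V), (∀ e ∈ A, ∀ v ∈ e, ∃ c ∈ S, ∃ i, g c i = v) →
      (∀ e ∈ B, ∀ v ∈ e, ∃ c ∈ T, ∃ i, g c i = v) → Disjoint A B := by
    intro A B hA hB
    rw [Finset.disjoint_left]
    intro e he hf
    induction e using Sym2.ind with
    | _ x y => exact sep A B hA hB _ he _ hf x ⟨Sym2.mem_mk_left _ _, Sym2.mem_mk_left _ _⟩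
  have mat : ∀ A B : Finset (Sym2 V), (∀ e ∈ A, ∀ v ∈ e, ∃ c ∈ S, ∃ i, g c i = v) →
      (∀ e ∈ B, ∀ v ∈ e, ∃ c ∈ T, ∃ i, g c i = v) → IsMatchingE G A → IsMatchingE G B →
      IsMatchingE G (A ∪ B) := by
    intro A B hA hB mA mB
    refine ⟨?_, ?_⟩
    · rw [Finset.coe_union]; exact Set.union_subset mA.1 mB.1
    · intro e he f hf hne v hv
      rcases Finset.mem_union.1 he with he | he <;> rcases Finset.mem_union.1 hf with hf | hf
      · exact mA.2 e he f hf hne v hv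
      · exact sep A B hA hB e he f hf v hv
      · exact sep A B hA hB f hf e he v hv.symm
      · exact mB.2 e he f hf hne v hv
  have sup : ∀ A B : Finset (Sym2 V), (∀ e ∈ A, ∀ v ∈ e, ∃ c ∈ S, ∃ i, g c i = v) →
      (∀ e ∈ B, ∀ v ∈ e, ∃ c ∈ T, ∃ i, g c i = v) →
      ∀ e ∈ A ∪ B, ∀ v ∈ e, ∃ c ∈ S ∪ T, ∃ i, g c i = v := by
    intro A B hA hB e he v hv
    rcases Finset.mem_union.1 he with he | he
    · obtain ⟨c, hc, h⟩ := hA e he v hv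
      exact ⟨c, Finset.mem_union_left _ hc, h⟩
    · obtain ⟨c, hc, h⟩ := hB e he v hv
      exact ⟨c, Finset.mem_union_right _ hc, h⟩
  refine ⟨H ∪ K, H' ∪ K', mat _ _ s t m n, mat _ _ s' t' m' n', ?_, sup _ _ s t, sup _ _ s' t',
    ?_, ?_⟩
  · rw [Finset.disjoint_union_left, Finset.disjoint_union_right, Finset.disjoint_union_right]
    exact ⟨⟨d, disj _ _ s t'⟩, (disj _ _ s' t).symm, d'⟩
  · rw [Finset.card_union_of_disjoint (disj _ _ s t), ca, ca']
  · rw [Finset.card_union_of_disjoint (disj _ _ s' t')]; omega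

/-- Purely combinatorial data of two disjoint matchings in an edge set. -/
def Good {W : Type*} [Fintype W] [DecidableEq W] (E Q Q' : Finset (Sym2 W)) : Prop :=
  (Q ⊆ E ∧ Q' ⊆ E ∧ Disjoint Q Q') ∧ (∀ e ∈ Q, ∀ f ∈ Q, e ≠ f → Disjoint e.toFinset f.toFinset) ∧
    (∀ e ∈ Q', ∀ f ∈ Q', e ≠ f → Disjoint e.toFinset f.toFinset)

instance {W : Type*} [Fintype W] [DecidableEq W] (E Q Q' : Finset (Sym2 W)) :
    Decidable (Good E Q Q') := by
  unfold Good; infer_instance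

theorem hasPair_of_good {V C W : Type*} [DecidableEq V] [Fintype W] [DecidableEq W]
    {G : SimpleGraph V} {g : C → Fin 10 → V} (S : Finset C) (h : W → V)
    (hinj : Function.Injective h) (hs : ∀ w, ∃ c ∈ S, ∃ i, g c i = h w)
    (E Q Q' : Finset (Sym2 W)) (hE : ∀ e ∈ E, Sym2.map h e ∈ G.edgeSet) (hQ : Good E Q Q') :
    HasPair G g S Q.card Q'.card := by
  obtain ⟨⟨q1, q2, q3⟩, q4, q5⟩ := hQ
  have minj := Sym2.map.injective hinj
  have mat : ∀ A : Finset (Sym2 W), A ⊆ E →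
      (∀ e ∈ A, ∀ f ∈ A, e ≠ f → Disjoint e.toFinset f.toFinset) →
      IsMatchingE G (A.image (Sym2.map h)) := by
    intro A hA hm
    refine ⟨?_, ?_⟩
    · intro e he
      obtain ⟨e, he', rfl⟩ := Finset.mem_image.1 (Finset.mem_coe.1 he)
      exact hE e (hA he')
    · intro e he f hf hne v hv
      obtain ⟨e, he', rfl⟩ := Finset.mem_image.1 he
      obtain ⟨f, hf', rfl⟩ := Finset.mem_image.1 hf
      obtain ⟨h1, h2⟩ := hv
      obtain ⟨x, hx, rfl⟩ := Sym2.mem_map.1 h1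
      obtain ⟨y, hy, hxy⟩ := Sym2.mem_map.1 h2
      obtain rfl := hinj hxy
      exact Finset.disjoint_left.1 (hm e he' f hf' (fun h => hne (by rw [h])))
        (Sym2.mem_toFinset.2 hx) (Sym2.mem_toFinset.2 hy)
  have sup : ∀ A : Finset (Sym2 W), ∀ e ∈ A.image (Sym2.map h), ∀ v ∈ e,
      ∃ c ∈ S, ∃ i, g c i = v := by
    intro A e he v hv
    obtain ⟨e, he', rfl⟩ := Finset.mem_image.1 he
    obtain ⟨x, hx, rfl⟩ := Sym2.mem_map.1 hv
    exact hs x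
  exact ⟨Q.image (Sym2.map h), Q'.image (Sym2.map h), mat _ q1 q4, mat _ q2 q5,
    (Finset.disjoint_image minj).2 q3, sup _, sup _,
    Finset.card_image_of_injective _ minj, Finset.card_image_of_injective _ minj⟩

theorem two_mul_card_le {V : Type*} [Fintype V] [DecidableEq V] (G : SimpleGraph V)
    (M : Finset (Sym2 V)) (hM : IsMatchingE G M) : 2 * M.card ≤ Fintype.card V := by
  have h1 : (M.biUnion Sym2.toFinset).card = ∑ e ∈ M, e.toFinset.card := by
    apply Finset.card_biUnion
    intro e he f hf hne
    rw [Function.onFun, Finset.disjoint_left]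
    intro x hx hy
    exact hM.2 e he f hf hne x ⟨Sym2.mem_toFinset.1 hx, Sym2.mem_toFinset.1 hy⟩
  have h2 : ∑ e ∈ M, e.toFinset.card = ∑ e ∈ M, 2 :=
    Finset.sum_congr rfl fun e he =>
      Sym2.card_toFinset_of_not_isDiag e (G.not_isDiag_of_mem_edgeSet (hM.1 he))
  have h3 := Finset.card_le_univ (M.biUnion Sym2.toFinset)
  rw [h1, h2, Finset.sum_const, smul_eq_mul] at h3
  omega

theorem no_pair {V : Type*} [Fintype V] [DecidableEq V] (G : SimpleGraph V) (k : ℕ)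
    (hk : Fintype.card V = 10 * k) (heq : 4 * gBeta G = 5 * gAlpha G)
    (H H' : Finset (Sym2 V)) (hH : IsMatchingE G H) (hH' : IsMatchingE G H')
    (hd : Disjoint H H') (hs : 8 * k ≤ H.card + H'.card) (hl : 4 * k + 1 ≤ H.card) : False := by
  have hc : ∀ M, IsMatchingE G M → M.card ≤ 5 * k := fun M hM => by
    have := two_mul_card_le G M hM; omega
  have hb : gBeta G ≤ 5 * k := by
    apply csSup_le'
    rintro n ⟨M, hM, rfl⟩
    exact hc M hM
  have hα : gAlpha G ≤ 4 * k := by omega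
  have bl : BddAbove {n | ∃ H H' : Finset (Sym2 V), IsMatchingE G H ∧ IsMatchingE G H' ∧
      Disjoint H H' ∧ H.card + H'.card = n} := by
    refine ⟨10 * k, ?_⟩
    rintro n ⟨A, B, hA, hB, -, rfl⟩
    have := hc A hA
    have := hc B hB
    omega
  have ba : BddAbove {n | ∃ H H' : Finset (Sym2 V), IsMatchingE G H ∧ IsMatchingE G H' ∧
      Disjoint H H' ∧ H.card + H'.card = gLam G ∧ H.card = n} := by
    refine ⟨5 * k, ?_⟩
    rintro n ⟨A, B, hA, hB, -, -, rfl⟩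
    exact hc A hA
  have hle : H.card + H'.card ≤ gLam G := le_csSup bl ⟨H, H', hH, hH', hd, rfl⟩
  have hale : ∀ A B : Finset (Sym2 V), IsMatchingE G A → IsMatchingE G B → Disjoint A B →
      A.card + B.card = gLam G → A.card ≤ gAlpha G := fun A B hA hB hAB h =>
    le_csSup ba ⟨A, B, hA, hB, hAB, h, rfl⟩
  obtain ⟨A, B, hA, hB, hAB, h⟩ : ∃ A B : Finset (Sym2 V), IsMatchingE G A ∧ IsMatchingE G B ∧
      Disjoint A B ∧ A.card + B.card = gLam G :=
    Nat.sSup_mem (s := {n | ∃ H H' : Finset (Sym2 V), IsMatchingE G H ∧ IsMatchingE G H' ∧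
      Disjoint H H' ∧ H.card + H'.card = n}) ⟨_, H, H', hH, hH', hd, rfl⟩ bl
  have h1 := hale A B hA hB hAB h
  have h2 := hale B A hB hA hAB.symm (by omega)
  have h3 := hale H H' hH hH' hd (by omega)
  omega

theorem extend_pair {V C : Type*} [DecidableEq V] [DecidableEq C] {G F : SimpleGraph V}
    {g : C → Fin 10 → V} (hg : IsPar F g) (hFG : F ≤ G) {S : Finset C} {a b : ℕ}
    (h : HasPair G g S a b) (T : Finset C) (hST : Disjoint S T) :
    HasPair G g (S ∪ T) (a + 4 * T.card) (b + 4 * T.card) := by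
  induction T using Finset.induction_on with
  | empty => simpa using h
  | insert c T hc ih =>
    rw [Finset.disjoint_insert_right] at hST
    have h1 := ih hST.2
    have h2 : HasPair G g {c} 4 4 := by
      have h0 := hasPair_of_good (G := G) (g := g) {c} (g c) (fun i j h => (hg.inj _ _ _ _ h).2)
        (fun w => ⟨c, by simp, w, rfl⟩) SpE {s(0, 1), s(2, 3), s(5, 6), s(7, 8)}
        {s(1, 2), s(3, 4), s(6, 7), s(8, 9)}
        (fun e he => SimpleGraph.edgeSet_mono hFG (hg.edge c e he)) (by decide +kernel)
      have c1 : ({s(0, 1), s(2, 3), s(5, 6), s(7, 8)} : Finset (Sym2 (Fin 10))).card = 4 := by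
        decide +kernel
      have c2 : ({s(1, 2), s(3, 4), s(6, 7), s(8, 9)} : Finset (Sym2 (Fin 10))).card = 4 := by
        decide +kernel
      rwa [c1, c2] at h0
    have h3 := h1.union hg h2 (by
      rw [Finset.disjoint_singleton_right, Finset.mem_union]; tauto)
    rw [Finset.card_insert_of_notMem hc]
    have e1 : S ∪ insert c T = S ∪ T ∪ {c} := by
      ext x; simp only [Finset.mem_union, Finset.mem_insert, Finset.mem_singleton]; tauto
    rw [e1]
    convert h3 using 1 <;> ring

theorem no_local {V C : Type*} [Fintype V] [DecidableEq V] [Fintype C] [DecidableEq C]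
    {G F : SimpleGraph V} {g : C → Fin 10 → V} (hg : IsPar F g) (hFG : F ≤ G)
    (heq : 4 * gBeta G = 5 * gAlpha G) {S : Finset C} {a b : ℕ}
    (h : HasPair G g S a b) (h1 : 8 * S.card ≤ a + b) (h2 : 4 * S.card + 1 ≤ a) : False := by
  have hk : Fintype.card V = 10 * Fintype.card C := by
    have hbij : Function.Bijective (fun p : C × Fin 10 => g p.1 p.2) := by
      constructor
      · rintro ⟨c, i⟩ ⟨d, j⟩ h
        obtain ⟨rfl, rfl⟩ := hg.inj _ _ _ _ h
        rfl
      · intro v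
        obtain ⟨c, i, h⟩ := hg.surj v
        exact ⟨(c, i), h⟩
    rw [← Fintype.card_of_bijective hbij, Fintype.card_prod, Fintype.card_fin, mul_comm]
  have hS := Finset.card_add_card_compl S
  obtain ⟨H, H', m, m', d, -, -, ca, cb⟩ := extend_pair hg hFG h Sᶜ disjoint_compl_right
  refine no_pair G (Fintype.card C) hk heq H H' m m' d ?_ ?_ <;> omega

theorem single_case {V C : Type*} [Fintype V] [DecidableEq V] [Fintype C] [DecidableEq C]
    {G F : SimpleGraph V} {g : C → Fin 10 → V} (hg : IsPar F g) (hFG : F ≤ G)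
    (heq : 4 * gBeta G = 5 * gAlpha G) (c : C) (x y : Fin 10) (hxy : G.Adj (g c x) (g c y))
    (Q Q' : Finset (Sym2 (Fin 10))) (hQ : Good (insert s(x, y) SpE) Q Q')
    (h1 : 8 ≤ Q.card + Q'.card) (h2 : 5 ≤ Q.card) : False := by
  refine no_local hg hFG heq (S := {c}) (hasPair_of_good (G := G) (g := g) {c} (g c)
    (fun i j h => (hg.inj _ _ _ _ h).2)
    (fun w => ⟨c, by simp, w, rfl⟩) (insert s(x, y) SpE) Q Q' ?_ hQ) (by simpa) (by simpa)
  intro e he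
  rcases Finset.mem_insert.1 he with rfl | he
  · exact hxy
  · exact SimpleGraph.edgeSet_mono hFG (hg.edge c e he)

theorem double_case {V C : Type*} [Fintype V] [DecidableEq V] [Fintype C] [DecidableEq C]
    {G F : SimpleGraph V} {g : C → Fin 10 → V} (hg : IsPar F g) (hFG : F ≤ G)
    (heq : 4 * gBeta G = 5 * gAlpha G) (c d : C) (hcd : c ≠ d) (x y : Fin 10)
    (hxy : G.Adj (g c x) (g d y))
    (Q Q' : Finset (Sym2 (Fin 10 ⊕ Fin 10)))
    (hQ : Good (insert s(.inl x, .inr y)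
      (SpE.image (Sym2.map .inl) ∪ SpE.image (Sym2.map .inr))) Q Q')
    (h1 : 16 ≤ Q.card + Q'.card) (h2 : 9 ≤ Q.card) : False := by
  have hc : ({c, d} : Finset C).card = 2 := Finset.card_pair hcd
  refine no_local hg hFG heq (S := {c, d}) (hasPair_of_good (G := G) (g := g) {c, d}
    (Sum.elim (g c) (g d)) ?_ ?_ _ Q Q' ?_ hQ) (by omega) (by omega)
  · rintro (i | i) (j | j) h
    · rw [(hg.inj _ _ _ _ h).2]
    · exact absurd (hg.inj _ _ _ _ h).1 hcd
    · exact absurd (hg.inj _ _ _ _ h).1.symm hcd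
    · rw [(hg.inj _ _ _ _ h).2]
  · rintro (i | i)
    · exact ⟨c, by simp, i, rfl⟩
    · exact ⟨d, by simp, i, rfl⟩
  · intro e he
    rcases Finset.mem_insert.1 he with rfl | he
    · exact hxy
    · rcases Finset.mem_union.1 he with he | he
      · obtain ⟨e, he', rfl⟩ := Finset.mem_image.1 he
        rw [Sym2.map_map]
        exact SimpleGraph.edgeSet_mono hFG (hg.edge c e he')
      · obtain ⟨e, he', rfl⟩ := Finset.mem_image.1 he
        rw [Sym2.map_map]
        exact SimpleGraph.edgeSet_mono hFG (hg.edge d e he')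

/-- Reversing the first path. -/
def flipA : Equiv.Perm (Fin 10) := 
  ⟨![4, 3, 2, 1, 0, 5, 6, 7, 8, 9], ![4, 3, 2, 1, 0, 5, 6, 7, 8, 9],
    by unfold Function.LeftInverse; decide, by unfold Function.RightInverse Function.LeftInverse; decide⟩
/-- Exchanging the two paths. -/
def swapAB : Equiv.Perm (Fin 10) :=
  ⟨![5, 6, 7, 8, 9, 0, 1, 2, 3, 4], ![5, 6, 7, 8, 9, 0, 1, 2, 3, 4],
    by unfold Function.LeftInverse; decide, by unfold Function.RightInverse Function.LeftInverse; decide⟩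

theorem auts (i : Fin 10) : ∃ σ ∈ ([1, flipA, swapAB, swapAB * flipA] : List (Equiv.Perm (Fin 10))),
    i = σ 0 ∨ i = σ 1 ∨ i = σ 2 := by
  simp only [List.mem_cons, List.not_mem_nil, or_false, exists_eq_or_imp, exists_eq_left]
  revert i; decide +kernel

theorem auts_adj : ∀ σ ∈ ([1, flipA, swapAB, swapAB * flipA] : List (Equiv.Perm (Fin 10))),
    ∀ i j, s(σ i, σ j) ∈ SpE ↔ s(i, j) ∈ SpE := by
  intro σ hσ
  simp only [List.mem_cons, List.not_mem_nil, or_false] at hσ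
  rcases hσ with rfl | rfl | rfl | rfl <;> decide +kernel

theorem IsPar.normalise {V C : Type*} {F : SimpleGraph V} {g : C → Fin 10 → V} (hg : IsPar F g)
    (c : C) (i : Fin 10) :
    ∃ g' : C → Fin 10 → V, IsPar F g' ∧ (∀ d, d ≠ c → g' d = g d) ∧
      (g c i = g' c 0 ∨ g c i = g' c 1 ∨ g c i = g' c 2) := by
  obtain ⟨σ, hσ, h⟩ := auts i
  obtain ⟨g', h1, h2, h3⟩ := hg.twist c σ (auts_adj σ hσ)
  refine ⟨g', h1, h3, ?_⟩
  rw [h2, h2, h2]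
  rcases h with rfl | rfl | rfl
  · exact Or.inl rfl
  · exact Or.inr (Or.inl rfl)
  · exact Or.inr (Or.inr rfl)

/-- if `β(G)/α(G) = 5/4`, `F` is any spanning S-forest of `G`, and
`(u, v)` is an edge of `G` not in `F` with `u` a 1-vertex of `F`, then `v` is the base
of `u`: a 3-vertex of `F` at `F`-distance 2 from `u`. -/
theorem stmt16 {V : Type*} [Fintype V] [DecidableEq V] (G F : SimpleGraph V)
    (hiso : ∀ v : V, ∃ u : V, G.Adj v u)
    (heq : 4 * gBeta G = 5 * gAlpha G)
    (hFG : F ≤ G) (hF : IsSForest F) (u v : V)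
    (huv : G.Adj u v) (hnF : ¬ F.Adj u v) (hu : fdeg F u = 1) :
    fdeg F v = 3 ∧ F.dist u v = 2 := by
  classical
  obtain ⟨g₀, hg₀⟩ := exists_par F hF
  have : Fintype F.ConnectedComponent := Fintype.ofFinite _
  obtain ⟨c, i, rfl⟩ := hg₀.surj u
  obtain ⟨g, hg, -, hi⟩ := hg₀.normalise c i
  have hi' : g₀ c i = g c 0 := by
    rcases hi with hi | hi | hi
    · exact hi
    · rw [hi, hg.fdeg_eq] at hu
      exact absurd hu (by decide +kernel)
    · rw [hi, hg.fdeg_eq] at hu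
      exact absurd hu (by decide +kernel)
  rw [hi'] at huv hnF hu ⊢
  clear hi' hi hg₀
  obtain ⟨d, j, rfl⟩ := hg.surj v
  by_cases hcd : c = d
  · subst hcd
    have key := single_case hg hFG heq c 0 j huv
    have hj : j = 0 ∨ j = 1 ∨ j = 2 ∨ j = 3 ∨ j = 4 ∨ j = 5 ∨ j = 6 ∨ j = 7 ∨ j = 8 ∨ j = 9 := by
      clear * -
      revert j; decide
    rcases hj with rfl | rfl | rfl | rfl | rfl | rfl | rfl | rfl | rfl | rfl
    · exact absurd huv (G.irrefl)
    · exact absurd ((hg.adj _ _ _).2 ⟨1, rfl, by decide⟩) hnF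
    · refine ⟨?_, ?_⟩
      · rw [hg.fdeg_eq]; decide +kernel
      · have a1 : F.Adj (g c 0) (g c 1) := (hg.adj _ _ _).2 ⟨1, rfl, by decide⟩
        have a2 : F.Adj (g c 1) (g c 2) := (hg.adj _ _ _).2 ⟨2, rfl, by decide⟩
        have h1 : F.dist (g c 0) (g c 2) ≤ 2 :=
          SimpleGraph.dist_le (SimpleGraph.Walk.cons a1 (SimpleGraph.Walk.cons a2 .nil))
        have h2 : F.dist (g c 0) (g c 2) ≠ 0 :=
          ((a1.reachable.trans a2.reachable).pos_dist_of_ne huv.ne).ne'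
        have h3 : F.dist (g c 0) (g c 2) ≠ 1 := fun h => hnF (SimpleGraph.dist_eq_one_iff_adj.1 h)
        omega
    · exact (key {s(4, 3), s(0, 1), s(2, 7), s(6, 5), s(8, 9)} {s(3, 0), s(1, 2), s(7, 6)}
        (by decide +kernel) (by decide +kernel) (by decide +kernel)).elim
    · exact (key {s(1, 0), s(4, 3), s(2, 7), s(6, 5), s(8, 9)} {s(0, 4), s(3, 2), s(7, 6)}
        (by decide +kernel) (by decide +kernel) (by decide +kernel)).elim
    · exact (key {s(4, 3), s(2, 1), s(0, 5), s(6, 7), s(8, 9)} {s(3, 2), s(1, 0), s(5, 6), s(7, 8)}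
        (by decide +kernel) (by decide +kernel) (by decide +kernel)).elim
    · exact (key {s(5, 6), s(0, 1), s(2, 7), s(8, 9), s(3, 4)} {s(6, 0), s(1, 2), s(7, 8)}
        (by decide +kernel) (by decide +kernel) (by decide +kernel)).elim
    · exact (key {s(4, 3), s(2, 1), s(0, 7), s(8, 9), s(5, 6)} {s(3, 2), s(1, 0), s(7, 8)}
        (by decide +kernel) (by decide +kernel) (by decide +kernel)).elim
    · exact (key {s(9, 8), s(0, 1), s(2, 7), s(6, 5), s(3, 4)} {s(8, 0), s(1, 2), s(7, 6)}
        (by decide +kernel) (by decide +kernel) (by decide +kernel)).elim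
    · exact (key {s(4, 3), s(2, 1), s(0, 9), s(8, 7), s(6, 5)} {s(3, 2), s(1, 0), s(9, 8), s(7, 6)}
        (by decide +kernel) (by decide +kernel) (by decide +kernel)).elim
  · exfalso
    obtain ⟨g', hg', hne, hj⟩ := hg.normalise d j
    rw [← hne c hcd] at huv
    rcases hj with hj | hj | hj
    · rw [hj] at huv
      refine double_case hg' hFG heq c d hcd 0 0 huv
        {s(.inl 4, .inl 3), s(.inl 2, .inl 1), s(.inl 0, .inr 0), s(.inr 1, .inr 2),
          s(.inr 3, .inr 4), s(.inl 5, .inl 6), s(.inl 7, .inl 8), s(.inr 5, .inr 6),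
          s(.inr 7, .inr 8)}
        {s(.inl 3, .inl 2), s(.inl 1, .inl 0), s(.inr 0, .inr 1), s(.inr 2, .inr 3),
          s(.inl 6, .inl 7), s(.inl 8, .inl 9), s(.inr 6, .inr 7), s(.inr 8, .inr 9)}
        (by decide +kernel) (by decide +kernel) (by decide +kernel)
    · rw [hj] at huv
      refine double_case hg' hFG heq c d hcd 0 1 huv
        {s(.inl 4, .inl 3), s(.inl 2, .inl 1), s(.inl 0, .inr 1),
          s(.inr 4, .inr 3), s(.inr 2, .inr 7), s(.inr 6, .inr 5), s(.inr 8, .inr 9),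
          s(.inl 5, .inl 6), s(.inl 7, .inl 8)}
        {s(.inl 3, .inl 2), s(.inl 1, .inl 0), s(.inr 1, .inr 0), s(.inr 3, .inr 2),
          s(.inr 7, .inr 6), s(.inl 6, .inl 7), s(.inl 8, .inl 9)}
        (by decide +kernel) (by decide +kernel) (by decide +kernel)
    · rw [hj] at huv
      refine double_case hg' hFG heq c d hcd 0 2 huv
        {s(.inl 4, .inl 3), s(.inl 2, .inl 1), s(.inl 0, .inr 2),
          s(.inr 3, .inr 4), s(.inr 0, .inr 1), s(.inl 5, .inl 6), s(.inl 7, .inl 8),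
          s(.inr 5, .inr 6), s(.inr 7, .inr 8)}
        {s(.inl 3, .inl 2), s(.inl 1, .inl 0), s(.inr 2, .inr 3),
          s(.inl 6, .inl 7), s(.inl 8, .inl 9), s(.inr 6, .inr 7), s(.inr 8, .inr 9)}
        (by decide +kernel) (by decide +kernel) (by decide +kernel)
end

section
/- Let G be an S-graph with a spanning S-forest F satisfying condition (b): whenever a 1-vertex u of F is incident to an edge from Δ(G, F), the 2-vertex of F adjacent to u in F is not incident to any edge from B(G, F). Then there exists a pair (S, S') ∈ M₂(G) such that no edge of S ∪ S' belongs to Δ(G, F). -/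
open SimpleGraph

lemma spanner_adj_iff (i j : Fin 10) : Spanner10.Adj i j ↔
    (s(i, j) ∈ ({s(0, 1), s(1, 2), s(2, 3), s(3, 4), s(5, 6), s(6, 7), s(7, 8), s(8, 9),
      s(2, 7)} : Finset (Sym2 (Fin 10))) ∧ i ≠ j) := by
  simp [Spanner10]

instance spannerDec : DecidableRel Spanner10.Adj := fun i j =>
  decidable_of_iff _ (spanner_adj_iff i j).symm

lemma spanner_ncard (i : Fin 10) : (Spanner10.neighborSet i).ncard =
    (Finset.univ.filter (fun j => Spanner10.Adj i j)).card := by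
  rw [← Set.ncard_coe_finset]
  congr 1
  ext j
  simp

lemma spanner_deg : ∀ i j : Fin 10, Spanner10.Adj i j →
    (Finset.univ.filter (fun k => Spanner10.Adj i k)).card = 1 →
    (Finset.univ.filter (fun k => Spanner10.Adj j k)).card = 2 := by
  decide

lemma fdeg_eq {V : Type*} (F : SimpleGraph V) (c : F.ConnectedComponent)
    (φ : (F.induce c.supp) ≃g Spanner10) (v : V) (hv : v ∈ c.supp) :
    fdeg F v = (Spanner10.neighborSet (φ ⟨v, hv⟩)).ncard := by
  have h : F.neighborSet v =
      (fun i => (φ.symm i).1) '' Spanner10.neighborSet (φ ⟨v, hv⟩) := by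
    ext x
    simp only [mem_neighborSet, Set.mem_image]
    constructor
    · intro hx
      have hxc : x ∈ c.supp := by
        rw [ConnectedComponent.mem_supp_iff] at hv ⊢
        rw [← hv]
        exact (ConnectedComponent.connectedComponentMk_eq_of_adj hx).symm
      refine ⟨φ ⟨x, hxc⟩, ?_, by simp⟩
      rw [φ.map_adj_iff]
      exact hx
    · rintro ⟨i, hi, rfl⟩
      have h2 : (F.induce c.supp).Adj ⟨v, hv⟩ (φ.symm i) := by
        rw [← φ.map_adj_iff]
        simpa using hi
      exact h2
  rw [fdeg, h, Set.ncard_image_of_injective]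
  intro i j hij
  exact φ.symm.injective (Subtype.ext hij)

lemma fdeg_two {V : Type*} (F : SimpleGraph V) (hF : IsSForest F) (u v : V)
    (hu : fdeg F u = 1) (huv : F.Adj u v) : fdeg F v = 2 := by
  obtain ⟨φ⟩ := hF (F.connectedComponentMk u)
  have huc : u ∈ (F.connectedComponentMk u).supp := by simp
  have hvc : v ∈ (F.connectedComponentMk u).supp := by
    rw [ConnectedComponent.mem_supp_iff]
    exact (ConnectedComponent.connectedComponentMk_eq_of_adj huv).symm
  rw [fdeg_eq F _ φ u huc, spanner_ncard] at hu
  rw [fdeg_eq F _ φ v hvc, spanner_ncard]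
  refine spanner_deg _ _ ?_ hu
  rw [φ.map_adj_iff]
  exact huv

/-- A `Δ`-edge closes a triangle whose third vertex has exactly two `G`-neighbours. -/
lemma delta_triangle {V : Type*} [Fintype V] (G F : SimpleGraph V)
    (hFG : F ≤ G) (hF : IsSForest F) (hb : CondB G F) (e : Sym2 V) (he : e ∈ DeltaSet G F) :
    ∃ u v w : V, e = s(u, w) ∧ u ≠ w ∧ G.Adj v u ∧ G.Adj v w ∧
      (∀ f ∈ DeltaSet G F, v ∉ f) ∧ ∀ x, G.Adj v x → x = u ∨ x = w := by
  have he0 := he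
  obtain ⟨heG, u, w, rfl, hu, hw, hd⟩ := he
  have hr : F.Reachable u w := by
    by_contra h
    rw [dist_eq_zero_of_not_reachable h] at hd
    omega
  obtain ⟨p, hp⟩ := hr.exists_walk_length_eq_dist
  rw [hd] at hp
  obtain ⟨v, huv, hvw⟩ : ∃ v, F.Adj u v ∧ F.Adj v w := by
    match p, hp with
    | .cons h (.cons h' .nil), _ => exact ⟨_, h, h'⟩
  have hne : u ≠ w := by rintro rfl; omega
  have hv := fdeg_two F hF u v hu huv
  have hnD : ∀ f ∈ DeltaSet G F, v ∉ f := by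
    rintro f ⟨_, a, b, rfl, ha, hb', _⟩ hvf
    rcases Sym2.mem_iff.1 hvf with rfl | rfl <;> omega
  refine ⟨u, v, w, rfl, hne, hFG huv.symm, hFG hvw, hnD, ?_⟩
  intro x hx
  have hnB : s(v, x) ∉ BSet G F := fun h =>
    hb u v hu ⟨_, he0, Sym2.mem_mk_left _ _⟩ huv hv _ h (Sym2.mem_mk_left _ _)
  have hFx : F.Adj v x := by
    by_contra hn
    refine hnB ⟨hx, ?_⟩
    rintro ((h | h) | h)
    · exact hn h.1
    · exact hn h.1
    · exact hnD _ h (Sym2.mem_mk_left _ _)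
  have heq : ({u, w} : Set V) = F.neighborSet v := by
    apply Set.eq_of_subset_of_ncard_le
    · rintro y (rfl | rfl)
      · exact huv.symm
      · exact hvw
    · rw [Set.ncard_pair hne]
      exact hv.le
    · exact Set.toFinite _
  have : x ∈ ({u, w} : Set V) := by rw [heq]; exact hFx
  simpa using this

/-- Replace an edge `s(y, z)` by `s(v, y)`. -/
lemma swap_step {V : Type*} [DecidableEq V] (G : SimpleGraph V)
    (S S' : Finset (Sym2 V)) (hS : IsMatchingE G S) (hd : Disjoint S S') (v y z : V)
    (hvy : G.Adj v y) (hyz : s(y, z) ∈ S) (hvz : v ≠ z) (hN : ∀ x, G.Adj v x → x = y ∨ x = z)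
    (hS' : s(v, y) ∉ S') :
    IsMatchingE G (insert s(v, y) (S.erase s(y, z))) ∧
    Disjoint (insert s(v, y) (S.erase s(y, z))) S' ∧
    (insert s(v, y) (S.erase s(y, z))).card = S.card := by
  have key : ∀ f ∈ S, f ≠ s(y, z) → ∀ t ∈ s(v, y), t ∉ f := by
    intro f hf hne t ht htf
    rcases Sym2.mem_iff.1 ht with rfl | rfl
    · obtain ⟨x, rfl⟩ := htf
      rcases hN x (hS.1 hf) with rfl | rfl
      · exact hS.2 _ hf _ hyz hne x ⟨by simp, by simp⟩
      · exact hS.2 _ hf _ hyz hne x ⟨by simp, by simp⟩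
    · exact hS.2 _ hf _ hyz hne t ⟨htf, by simp⟩
  refine ⟨⟨?_, ?_⟩, ?_, ?_⟩
  · intro f hf
    simp only [Finset.coe_insert, Set.mem_insert_iff, Finset.mem_coe, Finset.mem_erase] at hf
    rcases hf with rfl | hf
    · exact hvy
    · exact hS.1 hf.2
  · intro e he f hf hef t ht
    rw [Finset.mem_insert, Finset.mem_erase] at he hf
    rcases he with rfl | he <;> rcases hf with rfl | hf
    · exact hef rfl
    · exact key f hf.2 hf.1 t ht.1 ht.2
    · exact key e he.2 he.1 t ht.2 ht.1
    · exact hS.2 _ he.2 _ hf.2 hef t ht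
  · rw [Finset.disjoint_insert_left]
    exact ⟨hS', hd.mono_left (Finset.erase_subset _ _)⟩
  · rw [Finset.card_insert_of_notMem, Finset.card_erase_add_one hyz]
    intro h
    rw [Finset.mem_erase] at h
    exact key _ h.2 h.1 v (by simp) (by simp)

open Classical in
lemma clean_one {V : Type*} [Fintype V] (G F : SimpleGraph V)
    (hFG : F ≤ G) (hF : IsSForest F) (hb : CondB G F) (S' : Finset (Sym2 V))
    (hS' : IsMatchingE G S') :
    ∀ (n : ℕ) (S : Finset (Sym2 V)), IsMatchingE G S → Disjoint S S' →
      (S.filter (· ∈ DeltaSet G F)).card = n →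
      ∃ T : Finset (Sym2 V), IsMatchingE G T ∧ Disjoint T S' ∧ T.card = S.card ∧
        ∀ e ∈ T, e ∉ DeltaSet G F := by
  intro n
  induction n with
  | zero =>
    intro S hS hd hc
    refine ⟨S, hS, hd, rfl, fun e he h => ?_⟩
    rw [Finset.card_eq_zero] at hc
    have : e ∈ S.filter (· ∈ DeltaSet G F) := Finset.mem_filter.2 ⟨he, h⟩
    rw [hc] at this
    simp at this
  | succ n ih =>
    intro S hS hd hc
    obtain ⟨e, he⟩ := Finset.card_pos.1 (by omega : 0 < (S.filter (· ∈ DeltaSet G F)).card)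
    have he1 := he
    rw [Finset.mem_filter] at he
    obtain ⟨u, v, w, hee, hne, hvu, hvw, hnD, hN⟩ := delta_triangle G F hFG hF hb e he.2
    have fin : ∀ y, (IsMatchingE G (insert s(v, y) (S.erase e)) ∧
        Disjoint (insert s(v, y) (S.erase e)) S' ∧
        (insert s(v, y) (S.erase e)).card = S.card) →
        ∃ T : Finset (Sym2 V), IsMatchingE G T ∧ Disjoint T S' ∧ T.card = S.card ∧
        ∀ e ∈ T, e ∉ DeltaSet G F := by
      rintro y ⟨h1, h2, h3⟩
      obtain ⟨T, t1, t2, t3, t4⟩ := ih _ h1 h2 (by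
        rw [Finset.filter_insert, if_neg (fun h => hnD _ h (by simp)), Finset.filter_erase,
          Finset.card_erase_of_mem he1, hc]
        rfl)
      exact ⟨T, t1, t2, t3.trans h3, t4⟩
    by_cases hcase : s(v, u) ∈ S'
    · apply fin w
      have hw : s(v, w) ∉ S' := fun h => hS'.2 _ h _ hcase (by
        intro h
        rw [Sym2.congr_right] at h
        exact hne h.symm) v ⟨by simp, by simp⟩
      have hew : e = s(w, u) := by rw [hee, Sym2.eq_swap]
      rw [hew] at he ⊢
      exact swap_step G S S' hS hd v w u hvw he.1 hvu.ne (fun x hx => (hN x hx).symm) hw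
    · apply fin u
      rw [hee] at he ⊢
      exact swap_step G S S' hS hd v u w hvu he.1 hvw.ne hN hcase

lemma exists_M2 {V : Type*} [Fintype V] (G : SimpleGraph V) :
    ∃ H H' : Finset (Sym2 V), InM2 G H H' := by
  classical
  have hcard : ∀ H : Finset (Sym2 V), H.card ≤ Fintype.card (Sym2 V) := fun H =>
    Finset.card_le_univ H
  have hl : gLam G ∈ {n | ∃ H H' : Finset (Sym2 V), IsMatchingE G H ∧ IsMatchingE G H' ∧
      Disjoint H H' ∧ H.card + H'.card = n} := by
    apply Nat.sSup_mem
    · exact ⟨0, ∅, ∅, by simp [IsMatchingE], by simp [IsMatchingE], by simp, by simp⟩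
    · refine ⟨Fintype.card (Sym2 V) + Fintype.card (Sym2 V), ?_⟩
      rintro n ⟨H, H', _, _, _, rfl⟩
      exact Nat.add_le_add (hcard _) (hcard _)
  have ha : gAlpha G ∈ {n | ∃ H H' : Finset (Sym2 V), IsMatchingE G H ∧ IsMatchingE G H' ∧
      Disjoint H H' ∧ H.card + H'.card = gLam G ∧ H.card = n} := by
    apply Nat.sSup_mem
    · obtain ⟨H, H', h1, h2, h3, h4⟩ := hl
      exact ⟨_, H, H', h1, h2, h3, h4, rfl⟩
    · refine ⟨Fintype.card (Sym2 V), ?_⟩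
      rintro n ⟨H, H', _, _, _, _, rfl⟩
      exact hcard _
  exact ha

/-- if `G` is an S-graph with spanning S-forest `F` satisfying condition
(b), then there is a pair `(S, S') ∈ M₂(G)` with `(S ∪ S') ∩ Δ(G, F) = ∅`. -/
theorem stmt18 {V : Type*} [Fintype V] [DecidableEq V] (G F : SimpleGraph V)
    (hFG : F ≤ G) (hF : IsSForest F) (hb : CondB G F) :
    ∃ S S' : Finset (Sym2 V), InM2 G S S' ∧
      ∀ e ∈ S ∪ S', e ∉ DeltaSet G F := by
  obtain ⟨H, H', h1, h2, h3, h4, h5⟩ := exists_M2 G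
  obtain ⟨T, t1, t2, t3, t4⟩ := clean_one G F hFG hF hb H' h2 _ H h1 h3 rfl
  obtain ⟨T', s1, s2, s3, s4⟩ := clean_one G F hFG hF hb T t1 _ H' h2 t2.symm rfl
  refine ⟨T, T', ⟨t1, s1, s2.symm, by omega, by omega⟩, ?_⟩
  intro e he
  rcases Finset.mem_union.1 he with he | he
  · exact t4 e he
  · exact s4 e he
end
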